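/- arXiv:2302.00708 — 2 statements merged into one kernel-verified Lean document; each statement's English description precedes it below -/
import Mathlib

section
/- For every natural number n and every B in {1, 3}, the number of 10-regular partitions satisfies b_10(25n + 5B − 1) ≡ p_3(5n + B) (mod 2); and for every B in {1, 2}, the number of 20-regular partitions satisfies b_20(25n + 5B − 1) ≡ p(5n + B) (mod 2). -/
/-- The number of `m`-regular partitions of `n`, i.e. partitions of `n`
in which no part is divisible by `m`. -/
noncomputable def numRegularPartitions (m n : ℕ) : ℕ :=
  Nat.card {π : n.Partition // ∀ j ∈ π.parts, ¬ m ∣ j}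

/-- The number of `t`-multipartitions of `n`, i.e. `t`-tuples of partitions
whose sizes sum to `n`. -/
noncomputable def numMultipartitions (t n : ℕ) : ℕ :=
  Nat.card {f : Fin t → Σ k : ℕ, k.Partition // (∑ i, (f i).1) = n}

namespace RegPart
open PowerSeries Filter Topology
open scoped PowerSeries.WithPiTopology

theorem two_ps {K : Type*} [Field K] [CharP K 2] : (2 : K⟦X⟧) = 0 := by
  have h : (2 : K) = 0 := CharTwo.two_eq_zero
  have := congrArg (C (R := K)) h
  rwa [map_ofNat, map_zero] at this

section Products
variable {K : Type*} [Field K] [TopologicalSpace K] [DiscreteTopology K]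

/-- Ring homomorphisms acting coefficientwise through finitely many coefficients are continuous. -/
theorem continuous_expand (m : ℕ) (hm : m ≠ 0) :
    Continuous (fun φ : K⟦X⟧ => expand m hm φ) := by
  rw [continuous_iff_continuousAt]
  intro φ
  rw [ContinuousAt, WithPiTopology.tendsto_iff_coeff_tendsto]
  intro d
  simp only [coeff_expand]
  split_ifs
  · exact ((WithPiTopology.continuous_coeff K _).tendsto φ)
  · exact tendsto_const_nhds

theorem continuous_rescale (a : K) :
    Continuous (fun φ : K⟦X⟧ => rescale a φ) := by
  rw [continuous_iff_continuousAt]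
  intro φ
  rw [ContinuousAt, WithPiTopology.tendsto_iff_coeff_tendsto]
  intro d
  simp only [coeff_rescale]
  exact ((continuous_of_discreteTopology (f := fun x : K => a ^ d * x)).tendsto _).comp
    ((WithPiTopology.continuous_coeff K d).tendsto φ)

theorem hasProd_F : HasProd (fun n ↦ (1 - X ^ (n + 1) : K⟦X⟧)) (pentagonalSeries K) :=
  WithPiTopology.hasProd_one_sub_X_pow K

theorem hasProd_expand {t : ℕ → K⟦X⟧} {φ : K⟦X⟧} (h : HasProd t φ) (m : ℕ) (hm : m ≠ 0) :
    HasProd (fun n => expand m hm (t n)) (expand m hm φ) :=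
  h.map (expand m hm : K⟦X⟧ →ₐ[K] K⟦X⟧) (continuous_expand m hm)

theorem hasProd_rescale {t : ℕ → K⟦X⟧} {φ : K⟦X⟧} (h : HasProd t φ) (a : K) :
    HasProd (fun n => rescale a (t n)) (rescale a φ) :=
  h.map (rescale a : K⟦X⟧ →+* K⟦X⟧) (continuous_rescale a)

theorem hasProd_expand_F (m : ℕ) (hm : m ≠ 0) :
    HasProd (fun n ↦ (1 - X ^ (m * (n + 1)) : K⟦X⟧)) (expand m hm (pentagonalSeries K)) := by
  have := hasProd_expand (hasProd_F (K := K)) m hm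
  simpa [pow_mul] using this

theorem hasProd_ite (m : ℕ) (hm : m ≠ 0) :
    HasProd (fun n ↦ if m ∣ n + 1 then (1 - X ^ (n + 1) : K⟦X⟧) else 1)
      (expand m hm (pentagonalSeries K)) := by
  have hinj : Function.Injective (fun n : ℕ => m * (n + 1) - 1) := by
    intro a b h
    have h1 : 0 < m * (a + 1) := by positivity
    have h2 : 0 < m * (b + 1) := by positivity
    have h3 : m * (a + 1) = m * (b + 1) := by simp only at h; omega
    have := Nat.eq_of_mul_eq_mul_left (Nat.pos_of_ne_zero hm) h3
    omega
  rw [← hinj.hasProd_iff]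
  · convert hasProd_expand_F (K := K) m hm using 1
    funext n
    have h1 : 0 < m * (n + 1) := by positivity
    have : m * (n + 1) - 1 + 1 = m * (n + 1) := by omega
    simp [this]
  · intro x hx
    rw [if_neg]
    rintro ⟨c, hc⟩
    apply hx
    refine ⟨c - 1, ?_⟩
    have : c ≠ 0 := by rintro rfl; simp at hc
    have h2 : c - 1 + 1 = c := by omega
    simp only [h2]
    omega

theorem expand_two_mul [CharP K 2] (m : ℕ) (hm : m ≠ 0) (hm2 : 2 * m ≠ 0) :
    expand (2 * m) hm2 (pentagonalSeries K) = expand m hm (pentagonalSeries K) ^ 2 := by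
  have h1 := hasProd_expand_F (K := K) (2 * m) hm2
  have h2 := (hasProd_expand_F (K := K) m hm).mul (hasProd_expand_F (K := K) m hm)
  rw [sq]
  refine h1.unique ?_
  convert h2 using 1
  funext n
  have : (2 : K⟦X⟧) = 0 := two_ps
  linear_combination (X ^ (m * (n + 1)) - X ^ (2 * m * (n+1))) * this

theorem restricted_mul (p : ℕ → Prop) [DecidablePred p] :
    HasProd (fun n => if p (n + 1) then (1 : K⟦X⟧) else 1 - X ^ (n + 1))
      ((PowerSeries.mk fun n ↦ ((Nat.Partition.restricted n p).card : K)) * pentagonalSeries K) := by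
  have h1 := (Nat.Partition.hasProd_powerSeriesMk_card_restricted K p).mul (hasProd_F (K := K))
  suffices h2 : (fun n => if p (n + 1) then (1 : K⟦X⟧) else 1 - X ^ (n + 1)) =
    fun n => (if p (n + 1) then ∑' j : ℕ, (X : K⟦X⟧) ^ ((n + 1) * j) else 1) *
      (1 - X ^ (n + 1)) by
    rw [h2]; exact h1
  funext n
  split_ifs
  · simp_rw [pow_mul]
    rw [WithPiTopology.tsum_pow_mul_one_sub_of_constantCoeff_eq_zero (by simp)]
  · simp

theorem regular_mul (m : ℕ) (hm : m ≠ 0) :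
    (PowerSeries.mk fun n ↦ ((Nat.Partition.restricted n (¬ m ∣ ·)).card : K)) *
      pentagonalSeries K = expand m hm (pentagonalSeries K) := by
  refine (restricted_mul (K := K) (¬ m ∣ ·)).unique ?_
  simpa using hasProd_ite (K := K) m hm

theorem partition_mul :
    (PowerSeries.mk fun n ↦ (Fintype.card n.Partition : K)) * pentagonalSeries K = 1 := by
  have h := restricted_mul (K := K) (fun _ => True)
  simp only [if_true] at h
  have := h.unique hasProd_one
  simpa [Nat.Partition.restricted] using this

theorem norm_term {ζ : K} (hζ : 1 + ζ + ζ ^ 2 + ζ ^ 3 + ζ ^ 4 = 0) (n : ℕ) :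
    (∏ k ∈ Finset.range 5, rescale (ζ ^ k) (1 - X ^ (n + 1) : K⟦X⟧)) =
      if 5 ∣ n + 1 then (1 - X ^ (n + 1)) ^ 5 else 1 - X ^ (5 * (n + 1)) := by
  have h5 : ζ ^ 5 = 1 := by linear_combination (ζ - 1) * hζ
  have hk : ∀ k : ℕ, rescale (ζ ^ k) (1 - X ^ (n + 1) : K⟦X⟧) =
      1 - (C (ζ ^ (n + 1))) ^ k * X ^ (n + 1) := by
    intro k
    simp only [map_sub, map_one, map_pow, rescale_X, mul_pow]
    congr 2
    rw [← pow_mul, ← pow_mul, mul_comm]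
  simp only [hk]
  split_ifs with h
  · obtain ⟨c, hc⟩ := h
    have : ζ ^ (n + 1) = 1 := by rw [hc, pow_mul, h5, one_pow]
    simp [this]
  · have hη : 1 + ζ ^ (n+1) + (ζ ^ (n+1)) ^ 2 + (ζ ^ (n+1)) ^ 3 + (ζ ^ (n+1)) ^ 4 = 0 := by
      have hmod : ζ ^ (n + 1) = ζ ^ ((n + 1) % 5) := by
        conv_lhs => rw [← Nat.mod_add_div (n + 1) 5, pow_add, pow_mul, h5, one_pow, mul_one]
      rw [hmod]
      have hlt : (n + 1) % 5 < 5 := Nat.mod_lt _ (by norm_num)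
      have hne : (n + 1) % 5 ≠ 0 := by omega
      generalize (n + 1) % 5 = r at *
      interval_cases r
      · exact absurd rfl hne
      · linear_combination hζ
      · linear_combination hζ + (ζ + ζ ^ 3) * h5
      · linear_combination hζ + (ζ + ζ ^ 4 + ζ ^ 2 + ζ ^ 7) * h5
      · linear_combination hζ + (ζ ^ 3 + ζ ^ 2 + ζ ^ 7 + ζ + ζ ^ 6 + ζ ^ 11) * h5
    have hC := congrArg (C (R := K)) hη
    simp only [map_add, map_one, map_zero, map_pow] at hC
    rw [pow_mul']
    simp only [Finset.prod_range_succ, Finset.prod_range_zero, map_pow]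
    set e : K⟦X⟧ := C ζ ^ (n + 1)
    set Y : K⟦X⟧ := X ^ (n + 1)
    have he5 : e ^ 5 = 1 := by linear_combination (e - 1) * hC
    have e1 : (1 - e * Y) * (1 - e ^ 4 * Y) = 1 - (e + e ^ 4) * Y + Y ^ 2 := by
      linear_combination Y ^ 2 * he5
    have e2 : (1 - e ^ 2 * Y) * (1 - e ^ 3 * Y) = 1 - (e ^ 2 + e ^ 3) * Y + Y ^ 2 := by
      linear_combination Y ^ 2 * he5
    have e3 : (1 - (e + e ^ 4) * Y + Y ^ 2) * (1 - (e ^ 2 + e ^ 3) * Y + Y ^ 2) =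
        1 + Y + Y ^ 2 + Y ^ 3 + Y ^ 4 := by
      linear_combination (-(Y + Y ^ 3) + Y ^ 2) * hC + Y ^ 2 * (e + e ^ 2) * he5
    rw [← e1, ← e2] at e3
    linear_combination (1 - Y) * e3

theorem norm_F {ζ : K} (hζ : 1 + ζ + ζ ^ 2 + ζ ^ 3 + ζ ^ 4 = 0) :
    (∏ k ∈ Finset.range 5, rescale (ζ ^ k) (pentagonalSeries K)) *
      expand 5 (by norm_num) (expand 5 (by norm_num) (pentagonalSeries K)) =
    expand 5 (by norm_num) (pentagonalSeries K) ^ 6 := by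
  have h5 : (5 : ℕ) ≠ 0 := by norm_num
  have h1 : HasProd (fun n => ∏ k ∈ Finset.range 5, rescale (ζ ^ k) (1 - X ^ (n + 1) : K⟦X⟧))
      (∏ k ∈ Finset.range 5, rescale (ζ ^ k) (pentagonalSeries K)) :=
    hasProd_prod fun k _ => hasProd_rescale hasProd_F (ζ ^ k)
  have h2 := h1.mul (hasProd_expand (hasProd_ite (K := K) 5 h5) 5 h5)
  have h3 := hasProd_ite (K := K) 5 h5
  have h4 := (hasProd_expand_F (K := K) 5 h5).mul (h3.mul (h3.mul (h3.mul (h3.mul h3))))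
  have h6 := h2.unique (a₂ := expand 5 h5 (pentagonalSeries K) * (expand 5 h5 (pentagonalSeries K) *
     (expand 5 h5 (pentagonalSeries K) * (expand 5 h5 (pentagonalSeries K) *
      (expand 5 h5 (pentagonalSeries K) * expand 5 h5 (pentagonalSeries K)))))) (by
    convert h4 using 1
    funext n
    rw [norm_term hζ]
    split_ifs with h
    · simp only [map_sub, map_one, map_pow, expand_X]
      ring
    · simp)
  rw [h6]
  ring

end Products
section Parity

/-- Two fundamental domains of an order-four permutation have the same size. -/
theorem card_domains {α : Type*} [DecidableEq α] (S : Finset α) (r : Equiv.Perm α)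
    (hr : ∀ x, r x ∈ S ↔ x ∈ S) (Q R : α → Prop) [DecidablePred Q] [DecidablePred R]
    (hR : ∀ x ∈ S, ∑ k ∈ Finset.range 4, (if R ((r ^ k) x) then 1 else 0) = 1)
    (hQ : ∀ x ∈ S, ∑ k ∈ Finset.range 4, (if Q ((r ^ k).symm x) then 1 else 0) = 1) :
    (S.filter Q).card = (S.filter R).card := by
  have hrk : ∀ (k : ℕ) x, (r ^ k) x ∈ S ↔ x ∈ S := by
    intro k
    induction k with
    | zero => simp
    | succ k ih => intro x; rw [pow_succ', Equiv.Perm.mul_apply, hr, ih]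
  rw [Finset.card_filter, Finset.card_filter]
  calc ∑ x ∈ S, (if Q x then 1 else 0)
      = ∑ x ∈ S, ∑ k ∈ Finset.range 4,
          (if Q x then 1 else 0) * (if R ((r ^ k) x) then 1 else 0) := by
        refine Finset.sum_congr rfl fun x hx => ?_
        rw [← Finset.mul_sum, hR x hx, mul_one]
    _ = ∑ k ∈ Finset.range 4, ∑ x ∈ S,
          (if Q x then 1 else 0) * (if R ((r ^ k) x) then 1 else 0) := Finset.sum_comm
    _ = ∑ k ∈ Finset.range 4, ∑ y ∈ S,
          (if Q ((r ^ k).symm y) then 1 else 0) * (if R y then 1 else 0) := by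
        refine Finset.sum_congr rfl fun k _ => ?_
        refine Finset.sum_equiv (r ^ k) (fun x => (hrk k x).symm) fun x _ => ?_
        rw [Equiv.symm_apply_apply]
    _ = ∑ y ∈ S, ∑ k ∈ Finset.range 4,
          (if Q ((r ^ k).symm y) then 1 else 0) * (if R y then 1 else 0) := Finset.sum_comm
    _ = ∑ y ∈ S, (if R y then 1 else 0) := by
        refine Finset.sum_congr rfl fun x hx => ?_
        rw [← Finset.sum_mul, hQ x hx, one_mul]

/-- The quarter turn of the plane lattice. -/
def rot : Equiv.Perm (ℤ × ℤ) where
  toFun x := (x.2, -x.1)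
  invFun x := (-x.2, x.1)
  left_inv x := by simp
  right_inv x := by simp

/-- Lattice points on the circle of squared radius `24 N + 2` in a suitable congruence class. -/
noncomputable def circ (N : ℕ) : Finset (ℤ × ℤ) :=
  ((Finset.Icc (-(24 * N + 2 : ℤ)) (24 * N + 2)) ×ˢ
    (Finset.Icc (-(24 * N + 2 : ℤ)) (24 * N + 2))).filter
    fun x => x.1 % 2 = 1 ∧ x.2 % 2 = 1 ∧ x.1 % 3 ≠ 0 ∧ x.2 % 3 ≠ 0 ∧ (x.1 - 2 * x.2) % 5 = 0 ∧
      x.1 ^ 2 + x.2 ^ 2 = 24 * N + 2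

theorem mem_circ (N : ℕ) (u v : ℤ) : (u, v) ∈ circ N ↔
    u % 2 = 1 ∧ v % 2 = 1 ∧ u % 3 ≠ 0 ∧ v % 3 ≠ 0 ∧ (u - 2 * v) % 5 = 0 ∧
      u ^ 2 + v ^ 2 = 24 * N + 2 := by
  simp only [circ, Finset.mem_filter, Finset.mem_product, Finset.mem_Icc, and_iff_right_iff_imp]
  rintro ⟨-, -, -, -, -, h⟩
  refine ⟨⟨?_, ?_⟩, ?_, ?_⟩ <;> nlinarith [sq_nonneg (u - 1), sq_nonneg (u + 1),
    sq_nonneg (v - 1), sq_nonneg (v + 1), sq_nonneg u, sq_nonneg v]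

def domQ (x : ℤ × ℤ) : Prop := 0 < 3 * x.1 - x.2 ∧ 0 < x.1 + 3 * x.2

def domR (x : ℤ × ℤ) : Prop :=
  x.1 % 6 = 5 ∧ (x.1 % 5 = 1 ∨ x.1 % 5 = 4 ∨ (x.1 % 5 = 0 ∧ x.2 % 6 = 5))

instance : DecidablePred domQ := fun x => by unfold domQ; infer_instance
instance : DecidablePred domR := fun x => by unfold domR; infer_instance

theorem card_Q_eq_R (N : ℕ) : ((circ N).filter domQ).card = ((circ N).filter domR).card := by
  refine card_domains (circ N) rot ?_ domQ domR ?_ ?_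
  · rintro ⟨u, v⟩
    simp only [rot, Equiv.coe_fn_mk, mem_circ]
    constructor
    · rintro ⟨h1, h2, h3, h4, h5, h6⟩
      refine ⟨by omega, by omega, by omega, by omega, by omega, by linarith⟩
    · rintro ⟨h1, h2, h3, h4, h5, h6⟩
      refine ⟨by omega, by omega, by omega, by omega, by omega, by linarith⟩
  · rintro ⟨u, v⟩ hx
    rw [mem_circ] at hx
    obtain ⟨h1, h2, h3, h4, h5, -⟩ := hx
    simp only [Finset.sum_range_succ, Finset.sum_range_zero, pow_succ, pow_zero, one_mul,
      Equiv.Perm.mul_apply, Equiv.Perm.one_apply, rot, Equiv.coe_fn_mk, domR, neg_neg]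
    have hu : u % 6 = 1 ∨ u % 6 = 5 := by omega
    have hv : v % 6 = 1 ∨ v % 6 = 5 := by omega
    have nu : (-u) % 6 = 6 - u % 6 := by omega
    have nv : (-v) % 6 = 6 - v % 6 := by omega
    have h55 : (u % 5 = 0 ∧ v % 5 = 0 ∧ (-u) % 5 = 0 ∧ (-v) % 5 = 0) ∨
        (u % 5 = 1 ∧ v % 5 = 3 ∧ (-u) % 5 = 4 ∧ (-v) % 5 = 2) ∨
        (u % 5 = 2 ∧ v % 5 = 1 ∧ (-u) % 5 = 3 ∧ (-v) % 5 = 4) ∨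
        (u % 5 = 3 ∧ v % 5 = 4 ∧ (-u) % 5 = 2 ∧ (-v) % 5 = 1) ∨
        (u % 5 = 4 ∧ v % 5 = 2 ∧ (-u) % 5 = 1 ∧ (-v) % 5 = 3) := by
      clear hu hv nu nv h1 h2 h3 h4
      have c5 : u % 5 = 0 ∨ u % 5 = 1 ∨ u % 5 = 2 ∨ u % 5 = 3 ∨ u % 5 = 4 := by omega
      rcases c5 with c | c | c | c | c
      · exact Or.inl (by omega)
      · exact Or.inr (Or.inl (by omega))
      · exact Or.inr (Or.inr (Or.inl (by omega)))
      · exact Or.inr (Or.inr (Or.inr (Or.inl (by omega))))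
      · exact Or.inr (Or.inr (Or.inr (Or.inr (by omega))))
    rw [nu, nv]
    rcases h55 with ⟨a1, a2, a3, a4⟩ | ⟨a1, a2, a3, a4⟩ | ⟨a1, a2, a3, a4⟩ | ⟨a1, a2, a3, a4⟩ |
      ⟨a1, a2, a3, a4⟩ <;> rw [a1, a2, a3, a4] <;> rcases hu with b1 | b1 <;>
      rcases hv with b2 | b2 <;> rw [b1, b2] <;> norm_num
  · rintro ⟨u, v⟩ hx
    rw [mem_circ] at hx
    obtain ⟨h1, h2, h3, h4, h5, -⟩ := hx
    simp only [Finset.sum_range_succ, Finset.sum_range_zero, pow_succ, pow_zero, one_mul,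
      Equiv.Perm.mul_def, Equiv.symm_trans_apply, Equiv.Perm.one_def, Equiv.refl_symm, Equiv.refl_apply, Equiv.Perm.one_apply, rot,
      Equiv.coe_fn_symm_mk, domQ]
    split_ifs <;> omega

theorem even_card_Q (N : ℕ) : Even ((circ N).filter domQ).card := by
  rw [even_iff_two_dvd, ← ZMod.natCast_eq_zero_iff, Finset.card_eq_sum_ones, Nat.cast_sum]
  refine Finset.sum_involution
    (fun x _ => ((3 * x.1 + 4 * x.2) / 5, (4 * x.1 - 3 * x.2) / 5)) ?_ ?_ ?_ ?_
  · intro x hx; decide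
  · rintro ⟨u, v⟩ hx - heq
    rw [Finset.mem_filter, mem_circ] at hx
    obtain ⟨⟨h1, h2, h3, h4, h5, -⟩, -⟩ := hx
    simp only [Prod.mk.injEq] at heq
    omega
  · rintro ⟨u, v⟩ hx
    rw [Finset.mem_filter, mem_circ] at hx ⊢
    obtain ⟨⟨h1, h2, h3, h4, h5, h6⟩, h7⟩ := hx
    simp only [domQ] at h7 ⊢
    obtain ⟨p, hp⟩ : ∃ p, 3 * u + 4 * v = 5 * p := ⟨(3 * u + 4 * v) / 5, by omega⟩
    obtain ⟨q, hq⟩ : ∃ q, 4 * u - 3 * v = 5 * q := ⟨(4 * u - 3 * v) / 5, by omega⟩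
    rw [hp, hq, Int.mul_ediv_cancel_left _ (by norm_num), Int.mul_ediv_cancel_left _ (by norm_num)]
    refine ⟨⟨by omega, by omega, by omega, by omega, by omega, ?_⟩, by omega⟩
    have : (25 : ℤ) * (p ^ 2 + q ^ 2) = 25 * (24 * N + 2) := by
      rw [← h6]
      linear_combination (-(3 * u + 4 * v) - 5 * p) * hp + (-(4 * u - 3 * v) - 5 * q) * hq
    linarith
  · rintro ⟨u, v⟩ hx
    rw [Finset.mem_filter, mem_circ] at hx
    obtain ⟨⟨h1, h2, h3, h4, h5, h6⟩, h7⟩ := hx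
    simp only [Prod.mk.injEq]
    omega

theorem mem_range_pent (n : ℕ) :
    n ∈ Set.range pentagonal ↔ ∃ u : ℤ, u % 6 = 5 ∧ u ^ 2 = 24 * n + 1 := by
  constructor
  · rintro ⟨k, rfl⟩
    refine ⟨6 * k - 1, by omega, ?_⟩
    linear_combination -12 * two_mul_natCast_pentagonal k
  · rintro ⟨u, hu, h⟩
    obtain ⟨k, rfl⟩ : ∃ k, u = 6 * k - 1 := ⟨(u + 1) / 6, by omega⟩
    refine ⟨k, ?_⟩
    have := two_mul_natCast_pentagonal k
    zify
    linarith

open Classical in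
/-- Pairs of pentagonal numbers with prescribed residues and given sum. -/
noncomputable def pairs (N : ℕ) : Finset (ℕ × ℕ) :=
  (Finset.HasAntidiagonal.antidiagonal N).filter fun x => x.1 ∈ Set.range pentagonal ∧ x.2 ∈ Set.range pentagonal ∧
    ((x.1 % 5 = 0 ∧ x.2 % 5 = 2) ∨ (x.1 % 5 = 1 ∧ x.2 % 5 = 1))

theorem sq_emod_five (u : ℤ) : u ^ 2 % 5 = (u % 5) ^ 2 % 5 := by
  rw [Int.emod_emod_of_dvd _ (dvd_refl _) |>.symm, sq, sq, Int.mul_emod]; simp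

theorem sq24 (u : ℤ) (h2 : u % 2 = 1) (h3 : u % 3 ≠ 0) : ∃ n : ℕ, u ^ 2 = 24 * n + 1 := by
  have h6 : u % 6 = 1 ∨ u % 6 = 5 := by omega
  have : u % 6 = 5 ∨ (-u) % 6 = 5 := by omega
  rcases this with h | h
  · obtain ⟨k, rfl⟩ : ∃ k, u = 6 * k - 1 := ⟨(u + 1) / 6, by omega⟩
    exact ⟨pentagonal k, by linear_combination -12 * two_mul_natCast_pentagonal k⟩
  · obtain ⟨k, hk⟩ : ∃ k, -u = 6 * k - 1 := ⟨(-u + 1) / 6, by omega⟩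
    exact ⟨pentagonal k, by
      linear_combination -12 * two_mul_natCast_pentagonal k + (-u + 6 * k - 1) * hk⟩

theorem mod5_cases (u : ℤ) (n : ℕ) (h : u ^ 2 = 24 * n + 1) :
    (n % 5 = 0 ∧ (u % 5 = 1 ∨ u % 5 = 4)) ∨ (n % 5 = 2 ∧ (u % 5 = 2 ∨ u % 5 = 3)) ∨
      (n % 5 = 1 ∧ u % 5 = 0) := by
  have h1 := sq_emod_five u
  have h2 : u % 5 = 0 ∨ u % 5 = 1 ∨ u % 5 = 2 ∨ u % 5 = 3 ∨ u % 5 = 4 := by omega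
  rcases h2 with h2 | h2 | h2 | h2 | h2 <;> rw [h2] at h1 <;> norm_num at h1 <;> omega

theorem card_R_eq (N : ℕ) : ((circ N).filter domR).card = (pairs N).card := by
  have key : ∀ u : ℤ, ∀ n : ℕ, u ^ 2 = 24 * n + 1 → ((u ^ 2 - 1) / 24).toNat = n := by
    intro u n h
    rw [h]; omega
  refine Finset.card_bij
    (fun x _ => (((x.1 ^ 2 - 1) / 24).toNat, ((x.2 ^ 2 - 1) / 24).toNat)) ?_ ?_ ?_
  · rintro ⟨u, v⟩ hx
    rw [Finset.mem_filter, mem_circ] at hx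
    obtain ⟨⟨h1, h2, h3, h4, h5, h6⟩, h7⟩ := hx
    simp only [domR] at h7
    obtain ⟨i, hi⟩ := sq24 u h1 h3
    obtain ⟨j, hj⟩ := sq24 v h2 h4
    have mi := mod5_cases u i hi
    have mj := mod5_cases v j hj
    simp only [key u i hi, key v j hj, pairs, Finset.mem_filter, Finset.HasAntidiagonal.mem_antidiagonal]
    refine ⟨by omega, (mem_range_pent i).2 ⟨u, h7.1, hi⟩, (mem_range_pent j).2 ?_, by omega⟩
    have h66 : v % 6 = 1 ∨ v % 6 = 5 := by omega
    have : v % 6 = 5 ∨ (-v) % 6 = 5 := by omega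
    rcases this with h | h
    · exact ⟨v, h, hj⟩
    · exact ⟨-v, h, by rw [neg_sq]; exact hj⟩
  · rintro ⟨u, v⟩ hx ⟨u', v'⟩ hx' heq
    rw [Finset.mem_filter, mem_circ] at hx hx'
    obtain ⟨⟨h1, h2, h3, h4, h5, h6⟩, h7⟩ := hx
    obtain ⟨⟨h1', h2', h3', h4', h5', h6'⟩, h7'⟩ := hx'
    simp only [domR] at h7 h7'
    obtain ⟨i, hi⟩ := sq24 u h1 h3
    obtain ⟨j, hj⟩ := sq24 v h2 h4
    obtain ⟨i', hi'⟩ := sq24 u' h1' h3'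
    obtain ⟨j', hj'⟩ := sq24 v' h2' h4'
    simp only [key u i hi, key v j hj, key u' i' hi', key v' j' hj', Prod.mk.injEq] at heq
    obtain ⟨rfl, rfl⟩ := heq
    have e1 := sq_eq_sq_iff_eq_or_eq_neg.1 (hi.trans hi'.symm)
    have e2 := sq_eq_sq_iff_eq_or_eq_neg.1 (hj.trans hj'.symm)
    simp only [Prod.mk.injEq]
    omega
  · rintro ⟨i, j⟩ hx
    simp only [pairs, Finset.mem_filter, Finset.HasAntidiagonal.mem_antidiagonal, mem_range_pent] at hx
    obtain ⟨hN, ⟨u, hu6, hu⟩, ⟨v, hv6, hv⟩, hm⟩ := hx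
    have mi := mod5_cases u i hu
    have mj := mod5_cases v j hv
    have hs : u ^ 2 + v ^ 2 = 24 * N + 2 := by rw [hu, hv, ← hN]; push_cast; ring
    by_cases h5 : (u - 2 * v) % 5 = 0
    · refine ⟨(u, v), ?_, ?_⟩
      · rw [Finset.mem_filter, mem_circ]
        simp only [domR]
        refine ⟨⟨by omega, by omega, by omega, by omega, h5, hs⟩, by omega⟩
      · simp only [key u i hu, key v j hv]
    · refine ⟨(u, -v), ?_, ?_⟩
      · rw [Finset.mem_filter, mem_circ]
        simp only [domR]
        refine ⟨⟨by omega, by omega, by omega, by omega, by omega, by rw [neg_sq]; exact hs⟩,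
          by omega⟩
      · simp only [neg_sq, key u i hu, key v j hv]

theorem even_pairs (N : ℕ) : Even (pairs N).card := by
  rw [← card_R_eq, ← card_Q_eq_R]; exact even_card_Q N

end Parity
section Identities

theorem id_FG {R : Type*} [CommRing R] (h2 : (2 : R) = 0) {a b c : R} (hac : a * c = b ^ 2) :
    (a + b + c) * (a ^ 4 + a ^ 3 * b + a * b ^ 3 + b ^ 4 + b ^ 3 * c + b * c ^ 3 + c ^ 4) =
    a ^ 5 + b ^ 5 + c ^ 5 := by
  linear_combination (a ^ 3 + a ^ 2 * b + 2 * b ^ 3 + b * c ^ 2 + c ^ 3) * hac +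
    (a ^ 4 * b + a ^ 3 * b ^ 2 + a ^ 2 * b ^ 3 + a * b ^ 4 + b ^ 5 + b ^ 4 * c
       + b ^ 3 * c ^ 2 + b ^ 2 * c ^ 3 + b * c ^ 4) * h2

theorem id_G2 {R : Type*} [CommRing R] (h2 : (2 : R) = 0) {a b c : R} (hac : a * c = b ^ 2) :
    (a ^ 4 + a ^ 3 * b + a * b ^ 3 + b ^ 4 + b ^ 3 * c + b * c ^ 3 + c ^ 4) ^ 2 =
    a ^ 8 + a ^ 6 * b ^ 2 + a ^ 2 * b ^ 6 + b ^ 8 + b ^ 6 * c ^ 2 + b ^ 2 * c ^ 6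
       + c ^ 8 := by
  linear_combination (2 * a ^ 3 * b ^ 3 + 2 * a ^ 3 * b * c ^ 2 + 2 * a ^ 3 * c ^ 3 + 2 * a ^ 2 * b ^ 4
       + 2 * a ^ 2 * b ^ 3 * c + 4 * a ^ 2 * b ^ 2 * c ^ 2 + 2 * a ^ 2 * b * c ^ 3
       + 2 * a * b ^ 5 + 4 * a * b ^ 4 * c + 2 * a * b ^ 3 * c ^ 2 + 6 * b ^ 6
       + 2 * b ^ 5 * c + 2 * b ^ 4 * c ^ 2 + 2 * b ^ 3 * c ^ 3) * hac +
    (a ^ 7 * b + a ^ 5 * b ^ 3 + 2 * a ^ 4 * b ^ 4 + 2 * a ^ 3 * b ^ 5 + a ^ 2 * b ^ 6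
       + 2 * a * b ^ 7 + 3 * b ^ 8 + 2 * b ^ 7 * c + b ^ 6 * c ^ 2 + 2 * b ^ 5 * c ^ 3
       + 2 * b ^ 4 * c ^ 4 + b ^ 3 * c ^ 5 + b * c ^ 7) * h2

theorem id_H {R : Type*} [CommRing R] (h2 : (2 : R) = 0) {a b c : R} (hac : a * c = b ^ 2) :
    b * (a ^ 8 + a ^ 6 * b ^ 2 + a ^ 2 * b ^ 6 + b ^ 8 + b ^ 6 * c ^ 2 + b ^ 2 * c ^ 6
       + c ^ 8) + (a ^ 5 + c ^ 5) * (a ^ 4 + a ^ 3 * b + a * b ^ 3 + b ^ 4 + b ^ 3 * c + b * c ^ 3 + c ^ 4) =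
    a ^ 9 + a ^ 5 * b ^ 4 + a ^ 4 * b ^ 5 + a * b ^ 8 + b ^ 9 + b ^ 8 * c
       + b ^ 5 * c ^ 4 + b ^ 4 * c ^ 5 + c ^ 9 := by
  linear_combination (a ^ 4 * b ^ 3 + a ^ 4 * b * c ^ 2 + a ^ 4 * c ^ 3 + a ^ 3 * b ^ 3 * c
       + a ^ 3 * b ^ 2 * c ^ 2 + a ^ 3 * c ^ 4 + a ^ 2 * b ^ 5 + a ^ 2 * b ^ 4 * c
       + a ^ 2 * b ^ 2 * c ^ 3 + a ^ 2 * b * c ^ 4 + a * b ^ 6 + a * b ^ 4 * c ^ 2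
       + a * b ^ 3 * c ^ 3 + b ^ 6 * c + b ^ 5 * c ^ 2 + b ^ 3 * c ^ 4) * hac +
    (a ^ 8 * b + a ^ 6 * b ^ 3 + a ^ 2 * b ^ 7 + b ^ 7 * c ^ 2 + b ^ 3 * c ^ 6
       + b * c ^ 8) * h2

theorem id_T {R : Type*} [CommRing R] (h2 : (2 : R) = 0) {a b c : R} (hac : a * c = b ^ 2) :
    (a ^ 8 + a ^ 6 * b ^ 2 + a ^ 2 * b ^ 6 + b ^ 8 + b ^ 6 * c ^ 2 + b ^ 2 * c ^ 6
       + c ^ 8) * (a ^ 9 + a ^ 5 * b ^ 4 + a ^ 4 * b ^ 5 + a * b ^ 8 + b ^ 9 + b ^ 8 * c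
       + b ^ 5 * c ^ 4 + b ^ 4 * c ^ 5 + c ^ 9) =
    a ^ 17 + a ^ 15 * b ^ 2 + a ^ 13 * b ^ 4 + a ^ 12 * b ^ 5 + a ^ 10 * b ^ 7
       + a ^ 8 * b ^ 9 + a ^ 2 * b ^ 15 + b ^ 17 + b ^ 15 * c ^ 2 + b ^ 9 * c ^ 8
       + b ^ 7 * c ^ 10 + b ^ 5 * c ^ 12 + b ^ 4 * c ^ 13 + b ^ 2 * c ^ 15 + c ^ 17 := by
  linear_combination (a ^ 8 * b ^ 6 * c + a ^ 8 * b ^ 2 * c ^ 5 + a ^ 8 * c ^ 7 + 2 * a ^ 7 * b ^ 8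
       + a ^ 7 * b ^ 5 * c ^ 3 + 2 * a ^ 7 * b ^ 4 * c ^ 4 + a ^ 7 * b ^ 2 * c ^ 6
       + a ^ 7 * c ^ 8 + a ^ 6 * b ^ 7 * c ^ 2 + 2 * a ^ 6 * b ^ 6 * c ^ 3
       + a ^ 6 * b ^ 4 * c ^ 5 + a ^ 6 * b ^ 2 * c ^ 7 + a ^ 5 * b ^ 10
       + a ^ 5 * b ^ 9 * c + 2 * a ^ 5 * b ^ 8 * c ^ 2 + a ^ 5 * b ^ 7 * c ^ 3
       + 2 * a ^ 5 * b ^ 6 * c ^ 4 + a ^ 5 * b ^ 4 * c ^ 6 + a ^ 5 * b ^ 2 * c ^ 8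
       + a ^ 4 * b ^ 11 + 3 * a ^ 4 * b ^ 10 * c + a ^ 4 * b ^ 9 * c ^ 2
       + 2 * a ^ 4 * b ^ 8 * c ^ 3 + 2 * a ^ 4 * b ^ 6 * c ^ 5
       + 2 * a ^ 4 * b ^ 4 * c ^ 7 + 3 * a ^ 3 * b ^ 12 + 2 * a ^ 3 * b ^ 11 * c
       + 2 * a ^ 3 * b ^ 10 * c ^ 2 + 2 * a ^ 3 * b ^ 8 * c ^ 4 + a ^ 3 * b ^ 7 * c ^ 5
       + 2 * a ^ 3 * b ^ 6 * c ^ 6 + a ^ 3 * b ^ 5 * c ^ 7 + 2 * a ^ 2 * b ^ 13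
       + 2 * a ^ 2 * b ^ 12 * c + 2 * a ^ 2 * b ^ 10 * c ^ 3 + a ^ 2 * b ^ 9 * c ^ 4
       + 2 * a ^ 2 * b ^ 8 * c ^ 5 + a ^ 2 * b ^ 7 * c ^ 6 + 3 * a * b ^ 14
       + 2 * a * b ^ 12 * c ^ 2 + 2 * a * b ^ 11 * c ^ 3 + 3 * a * b ^ 10 * c ^ 4
       + a * b ^ 9 * c ^ 5 + a * b ^ 6 * c ^ 8 + 3 * b ^ 14 * c + 2 * b ^ 13 * c ^ 2
       + 3 * b ^ 12 * c ^ 3 + b ^ 11 * c ^ 4 + b ^ 10 * c ^ 5 + 2 * b ^ 8 * c ^ 7) * hac +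
    (a ^ 11 * b ^ 6 + a ^ 9 * b ^ 8 + 2 * a ^ 7 * b ^ 10 + a ^ 6 * b ^ 11
       + a ^ 5 * b ^ 12 + a ^ 4 * b ^ 13 + 2 * a ^ 3 * b ^ 14 + a ^ 2 * b ^ 15
       + 2 * a * b ^ 16 + 2 * b ^ 16 * c + b ^ 15 * c ^ 2 + 2 * b ^ 14 * c ^ 3
       + b ^ 13 * c ^ 4 + b ^ 12 * c ^ 5 + b ^ 11 * c ^ 6 + 2 * b ^ 10 * c ^ 7
       + b ^ 8 * c ^ 9 + b ^ 6 * c ^ 11) * h2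

theorem id_D {R : Type*} [CommRing R] (h2 : (2 : R) = 0) {a b c : R} (hac : a * c = b ^ 2) :
    (a + b + c) ^ 6 + (b + (a + b + c)) * (a ^ 5 + b ^ 5 + c ^ 5) + (a + b + c) * b ^ 5 =
    0 := by
  linear_combination (7 * a ^ 4 + 30 * a ^ 3 * b + 15 * a ^ 3 * c + 75 * a ^ 2 * b ^ 2
       + 60 * a ^ 2 * b * c + 20 * a ^ 2 * c ^ 2 + 120 * a * b ^ 3
       + 110 * a * b ^ 2 * c + 60 * a * b * c ^ 2 + 15 * a * c ^ 3 + 140 * b ^ 4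
       + 120 * b ^ 3 * c + 75 * b ^ 2 * c ^ 2 + 30 * b * c ^ 3 + 7 * c ^ 4) * hac +
    (a ^ 6 + 4 * a ^ 5 * b + 11 * a ^ 4 * b ^ 2 + 25 * a ^ 3 * b ^ 3
       + 45 * a ^ 2 * b ^ 4 + 64 * a * b ^ 5 + 72 * b ^ 6 + 64 * b ^ 5 * c
       + 45 * b ^ 4 * c ^ 2 + 25 * b ^ 3 * c ^ 3 + 11 * b ^ 2 * c ^ 4 + 4 * b * c ^ 5
       + c ^ 6) * h2

theorem id_N0 {R : Type*} [CommRing R] (h2 : (2 : R) = 0) {a b c : R} (hac : a * c = b ^ 2) :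
    (a + b + c) * ((a ^ 2 + c ^ 2) ^ 2 + (a ^ 2 + c ^ 2) * (b ^ 2 + a * b + b * c) + (b ^ 2 + a * b + b * c) ^ 2) =
    a ^ 5 + b ^ 5 + c ^ 5 := by
  linear_combination (a ^ 3 + 2 * a ^ 2 * b + 2 * a ^ 2 * c + 7 * a * b ^ 2 + 4 * a * b * c
       + 2 * a * c ^ 2 + 10 * b ^ 3 + 7 * b ^ 2 * c + 2 * b * c ^ 2 + c ^ 3) * hac +
    (a ^ 4 * b + 2 * a ^ 3 * b ^ 2 + 3 * a ^ 2 * b ^ 3 + 5 * a * b ^ 4 + 5 * b ^ 5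
       + 5 * b ^ 4 * c + 3 * b ^ 3 * c ^ 2 + 2 * b ^ 2 * c ^ 3 + b * c ^ 4) * h2

theorem id_norm {R : Type*} [CommRing R] (h2 : (2 : R) = 0) {a b c z : R} (hac : a * c = b ^ 2)
    (hz : 1 + z + z ^ 2 + z ^ 3 + z ^ 4 = 0) :
    (a + b + c) * (a + z * b + z ^ 2 * c) * (a + z ^ 2 * b + (z ^ 2) ^ 2 * c) *
      (a + z ^ 3 * b + (z ^ 3) ^ 2 * c) * (a + z ^ 4 * b + (z ^ 4) ^ 2 * c) =
    a ^ 5 + b ^ 5 + c ^ 5 := by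
  have z5 : z ^ 5 = 1 := by linear_combination (z - 1) * hz
  have e1 : (a + z * b + z ^ 2 * c) * (a + z ^ 4 * b + (z ^ 4) ^ 2 * c) =
      a ^ 2 + c ^ 2 + (z + z ^ 4) * (b ^ 2 + a * b + b * c) := by
    linear_combination (b ^ 2 + b ^ 2 * z ^ 3 + b * c * (z ^ 4 + z) + c ^ 2 * (z ^ 5 + 1)) * z5 +
      (z ^ 8 + z ^ 2) * hac + b ^ 2 * hz - (z + z ^ 4) * b ^ 2 * h2
  have e2 : (a + z ^ 2 * b + (z ^ 2) ^ 2 * c) * (a + z ^ 3 * b + (z ^ 3) ^ 2 * c) =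
      a ^ 2 + c ^ 2 + (z ^ 2 + z ^ 3) * (b ^ 2 + a * b + b * c) := by
    linear_combination (b ^ 2 + b ^ 2 * z + b * c * (z ^ 3 + z ^ 2) + c ^ 2 * (z ^ 5 + 1)) * z5 +
      (z ^ 6 + z ^ 4) * hac + b ^ 2 * hz - (z ^ 2 + z ^ 3) * b ^ 2 * h2
  have e3 : ∀ p s : R, (p + (z + z ^ 4) * s) * (p + (z ^ 2 + z ^ 3) * s) =
      p ^ 2 + p * s + s ^ 2 := by
    intro p s
    linear_combination (p * s + s ^ 2) * hz + s ^ 2 * (z + z ^ 2) * z5 - (p * s + s ^ 2) * h2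
  rw [← id_N0 h2 hac, ← e3, ← e1, ← e2]
  ring

end Identities

section Algebra
variable {K : Type*} [Field K]

/-- The part of a power series supported on exponents congruent to `r` modulo `5`. -/
noncomputable def comp (r : ℕ) (φ : K⟦X⟧) : K⟦X⟧ :=
  PowerSeries.mk fun n => if n % 5 = r then coeff n φ else 0

/-- All exponents are congruent to `r` modulo `5`. -/
def Supp (r : ℕ) (φ : K⟦X⟧) : Prop := ∀ n, n % 5 ≠ r % 5 → coeff n φ = 0

theorem Supp.mul {r s : ℕ} {φ ψ : K⟦X⟧} (h1 : Supp r φ) (h2 : Supp s ψ) :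
    Supp (r + s) (φ * ψ) := by
  intro n hn
  rw [coeff_mul]
  refine Finset.sum_eq_zero ?_
  rintro ⟨i, j⟩ hij
  rw [Finset.HasAntidiagonal.mem_antidiagonal] at hij
  simp only at hij ⊢
  by_cases hi : i % 5 = r % 5
  · rw [h2 j (by omega), mul_zero]
  · rw [h1 i hi, zero_mul]

theorem Supp.pow {r : ℕ} {φ : K⟦X⟧} (h1 : Supp r φ) (k : ℕ) : Supp (k * r) (φ ^ k) := by
  induction k with
  | zero =>
    intro n hn
    rw [pow_zero, coeff_one, if_neg]
    rintro rfl; simp at hn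
  | succ k ih =>
    rw [pow_succ, add_mul, one_mul]; exact ih.mul h1

theorem supp_expand (φ : K⟦X⟧) : Supp 0 (expand 5 (by norm_num) φ) := by
  intro n hn
  exact coeff_expand_of_not_dvd _ _ _ (by omega)

theorem supp_comp (r : ℕ) (hr : r < 5) (φ : K⟦X⟧) : Supp r (comp r φ) := by
  intro n hn
  rw [comp, coeff_mk, if_neg (by omega)]

theorem supp_X : Supp 1 (X : K⟦X⟧) := by
  intro n hn
  rw [coeff_X, if_neg]; rintro rfl; simp at hn

variable [CharP K 2]

open Classical in
theorem coeff_F (n : ℕ) :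
    coeff n (pentagonalSeries K) = if n ∈ Set.range pentagonal then 1 else 0 := by
  split_ifs with h
  · obtain ⟨k, rfl⟩ := h
    rw [coeff_pentagonalSeries_pentagonal]
    rcases Int.even_or_odd k with h | h
    · simp [Int.negOnePow_even k h]
    · simp [Int.negOnePow_odd k h, CharTwo.neg_eq]
  · exact coeff_pentagonalSeries_eq_zero K h

theorem pent_mod (n : ℕ) (h : n ∈ Set.range pentagonal) : n % 5 = 0 ∨ n % 5 = 1 ∨ n % 5 = 2 := by
  obtain ⟨u, -, hu⟩ := (mem_range_pent n).1 h
  have := mod5_cases u n hu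
  omega

theorem F_split : pentagonalSeries K = comp 0 (pentagonalSeries K) + comp 1 (pentagonalSeries K) +
    comp 2 (pentagonalSeries K) := by
  ext n
  simp only [map_add, comp, coeff_mk, coeff_F]
  by_cases h : n ∈ Set.range pentagonal
  · rcases pent_mod n h with h1 | h1 | h1 <;> simp [h1]
  · simp [h]

theorem b_eq : comp 1 (pentagonalSeries K) =
    X * expand 5 (by norm_num) (expand 5 (by norm_num) (pentagonalSeries K)) := by
  classical
  ext n
  rcases n with _ | n
  · simp [comp]
  rw [coeff_succ_X_mul, comp, coeff_mk, coeff_expand]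
  by_cases h5 : 5 ∣ n
  · obtain ⟨m, rfl⟩ := h5
    rw [if_pos (show (5 * m + 1) % 5 = 1 by omega), if_pos (Dvd.intro m rfl), coeff_expand,
      Nat.mul_div_cancel_left _ (by norm_num), coeff_F]
    by_cases h : 5 ∣ m
    · obtain ⟨l, rfl⟩ := h
      rw [if_pos (Dvd.intro l rfl : 5 ∣ 5 * l), Nat.mul_div_cancel_left _ (by norm_num), coeff_F]
      refine if_congr ?_ rfl rfl
      rw [mem_range_pent, mem_range_pent]
      constructor
      · rintro ⟨u, hu, h⟩
        have := mod5_cases u _ h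
        obtain ⟨w, rfl⟩ : ∃ w, u = 5 * w := ⟨u / 5, by omega⟩
        refine ⟨-w, by omega, ?_⟩
        push_cast at h
        linarith
      · rintro ⟨u, hu, h⟩
        refine ⟨-5 * u, by omega, ?_⟩
        push_cast
        linarith
    · rw [if_neg h, if_neg]
      rintro hh
      obtain ⟨u, hu, h⟩ := (mem_range_pent _).1 hh
      have := mod5_cases u _ h
      obtain ⟨w, rfl⟩ : ∃ w, u = 5 * w := ⟨u / 5, by omega⟩
      have h25 : 25 * w ^ 2 = 24 * (5 * m + 1 : ℤ) + 1 := by push_cast at h; linarith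
      omega
  · rw [if_neg (by omega), if_neg h5]

theorem ac_eq : comp 0 (pentagonalSeries K) * comp 2 (pentagonalSeries K) =
    comp 1 (pentagonalSeries K) ^ 2 := by
  classical
  rw [← sub_eq_zero, sub_eq_add_neg]
  have hneg : ∀ φ : K⟦X⟧, -φ = φ := fun φ => by
    linear_combination -φ * two_ps (K := K)
  rw [hneg, sq]
  ext N
  rw [map_add, coeff_mul, coeff_mul, ← Finset.sum_add_distrib, map_zero]
  have hc : ((pairs N).card : K) = 0 := by
    obtain ⟨r, hr⟩ := even_pairs N
    rw [hr]; push_cast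
    exact CharTwo.add_self_eq_zero _
  rw [← hc, pairs, Finset.card_filter, Nat.cast_sum]
  refine Finset.sum_congr rfl ?_
  rintro ⟨i, j⟩ -
  simp only [comp, coeff_mk, coeff_F]
  by_cases h1 : i ∈ Set.range pentagonal <;> by_cases h2 : j ∈ Set.range pentagonal
  · rcases pent_mod i h1 with h3 | h3 | h3 <;> rcases pent_mod j h2 with h4 | h4 | h4 <;>
      simp [h1, h2, h3, h4]
  all_goals simp [h1, h2]

end Algebra
section Final
variable {K : Type*} [Field K] [CharP K 2]

theorem rescale_split {z : K} (hz : z ^ 5 = 1) :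
    rescale z (pentagonalSeries K) = comp 0 (pentagonalSeries K) +
      C z * comp 1 (pentagonalSeries K) + C z ^ 2 * comp 2 (pentagonalSeries K) := by
  ext n
  rw [← map_pow]
  simp only [map_add, coeff_rescale, coeff_C_mul, comp, coeff_mk]
  have hm : z ^ n = z ^ (n % 5) := by
    conv_lhs => rw [← Nat.mod_add_div n 5, pow_add, pow_mul, hz, one_pow, mul_one]
  rw [hm]
  by_cases h : n ∈ Set.range pentagonal
  · rcases pent_mod n h with h1 | h1 | h1 <;> simp [h1]
  · simp [coeff_F, h]

/-- Uniqueness: a series divisible by its own `5`-expansion vanishes if its constant term does. -/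
theorem eq_zero_of_expand {D W : K⟦X⟧} (h0 : coeff 0 D = 0)
    (h : D = W * expand 5 (by norm_num) D) : D = 0 := by
  ext n
  rw [map_zero]
  induction n using Nat.strong_induction_on with
  | _ n ih =>
    rw [h, coeff_mul]
    refine Finset.sum_eq_zero ?_
    rintro ⟨i, j⟩ hij
    rw [Finset.HasAntidiagonal.mem_antidiagonal] at hij
    simp only at hij ⊢
    rw [coeff_expand]
    split_ifs with h5
    · by_cases hj : j = 0
      · subst hj; simp [h0]
      · rw [ih (j / 5) (by omega), mul_zero]
    · rw [mul_zero]

theorem F_zero : coeff 0 (pentagonalSeries K) = 1 := by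
  rw [coeff_F, if_pos]
  exact ⟨0, by simp [pentagonal_def]⟩

theorem expand_ne_zero' {φ : K⟦X⟧} (h : coeff 0 φ = 1) :
    coeff 0 (expand 5 (by norm_num) φ) = 1 := by
  rw [coeff_expand, if_pos (dvd_zero 5)]; simpa using h

/-- The fundamental relations between the dissection parts. -/
theorem relations {ζ : K} (hζ : 1 + ζ + ζ ^ 2 + ζ ^ 3 + ζ ^ 4 = 0) (F f h a b c : K⟦X⟧)
    (hF : F = pentagonalSeries K) (hf : f = expand 5 (by norm_num) F)
    (hh : h = expand 5 (by norm_num) f) (ha : a = comp 0 F) (hb : b = comp 1 F)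
    (hc : c = comp 2 F) :
    F = a + b + c ∧ a * c = b ^ 2 ∧ b = X * h ∧ h * (a ^ 5 + b ^ 5 + c ^ 5) = f ^ 6 ∧
      a ^ 5 + c ^ 5 = f := by
  have h2 : (2 : K⟦X⟧) = 0 := two_ps
  have e1 : F = a + b + c := by subst_vars; exact F_split
  have e2 : a * c = b ^ 2 := by subst_vars; exact ac_eq
  have e3 : b = X * h := by subst_vars; exact b_eq
  have e4 : h * (a ^ 5 + b ^ 5 + c ^ 5) = f ^ 6 := by
    let _ : TopologicalSpace K := ⊥
    have _ : DiscreteTopology K := ⟨rfl⟩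
    have hn := norm_F hζ
    have h5 : ζ ^ 5 = 1 := by linear_combination (ζ - 1) * hζ
    have hr : ∀ k : ℕ, rescale (ζ ^ k) (pentagonalSeries K) =
        a + C ζ ^ k * b + (C ζ ^ k) ^ 2 * c := by
      intro k
      rw [rescale_split (by rw [← pow_mul, mul_comm, pow_mul, h5, one_pow]), ha, hb, hc, hF,
        map_pow]
    simp only [hr, Finset.prod_range_succ, Finset.prod_range_zero] at hn
    rw [← hF, ← hf, ← hh] at hn
    have hC := congrArg (C (R := K)) hζ
    simp only [map_add, map_one, map_zero, map_pow] at hC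
    rw [← id_norm h2 e2 hC, ← hn]
    ring
  have f0 : coeff 0 F = 1 := by rw [hF]; exact F_zero
  have f1 : coeff 0 f = 1 := by rw [hf]; exact expand_ne_zero' f0
  have f2 : coeff 0 h = 1 := by rw [hh]; exact expand_ne_zero' f1
  have hne : h ≠ 0 := by rintro rfl; simp at f2
  refine ⟨e1, e2, e3, e4, ?_⟩
  set D : K⟦X⟧ := F ^ 6 + X * f ^ 6 + F * f with hD
  have hDe : expand 5 (by norm_num) D = f ^ 6 + X ^ 5 * h ^ 6 + f * h := by
    rw [hD]; simp only [map_add, map_mul, map_pow, expand_X, ← hf, ← hh]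
  have hkey : D * h = F * expand 5 (by norm_num) D := by
    rw [hDe, hD]
    have hid := id_D h2 e2
    rw [← e1] at hid
    have hb5 : X ^ 5 * h ^ 5 = b ^ 5 := by rw [e3]; ring
    have : F * (f ^ 6 + X ^ 5 * h ^ 6 + f * h) = F * (f ^ 6 + b ^ 5 * h + f * h) := by
      rw [← hb5]; ring
    rw [this, ← e4]
    linear_combination h * hid - h * (a ^ 5 + b ^ 5 + c ^ 5) * e3 -
      (h * F * b ^ 5 + h * F * (a ^ 5 + b ^ 5 + c ^ 5)) * h2
  have hinv : h * h⁻¹ = 1 := PowerSeries.mul_inv_cancel h (by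
    rw [← coeff_zero_eq_constantCoeff_apply, f2]; exact one_ne_zero)
  have hD0 : D = 0 := by
    refine eq_zero_of_expand (W := h⁻¹ * F) ?_ ?_
    · rw [hD]
      simp only [coeff_zero_eq_constantCoeff_apply] at f0 f1 ⊢
      simp only [map_add, map_mul, map_pow, f0, f1, constantCoeff_X]
      have : (2 : K) = 0 := CharTwo.two_eq_zero
      linear_combination this
    · rw [mul_assoc, ← hkey]
      linear_combination -D * hinv
  rw [hD0, map_zero] at hDe
  have hb5 : X ^ 5 * h ^ 5 = b ^ 5 := by rw [e3]; ring
  apply mul_left_cancel₀ hne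
  linear_combination e4 - hDe - h * hb5 - (h * b ^ 5 + f * h) * h2

theorem coeff_G_part {G b e : K⟦X⟧} {p0 p1 p2 p3 : K⟦X⟧} (he : Supp 0 e)
    (hG : G = b + p0 + p1 + p2 + p3) (h0 : Supp 0 p0) (h1 : Supp 1 p1) (h2 : Supp 2 p2)
    (h3 : Supp 3 p3) (m : ℕ) : coeff (5 * m + 4) (e * G) = coeff (5 * m + 4) (e * b) := by
  rw [hG]
  simp only [mul_add, map_add]
  rw [(he.mul h0) _ (by omega), (he.mul h1) _ (by omega), (he.mul h2) _ (by omega),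
    (he.mul h3) _ (by omega)]
  simp

theorem Supp.add {r : ℕ} {φ ψ : K⟦X⟧} (h1 : Supp r φ) (h2 : Supp r ψ) : Supp r (φ + ψ) := by
  intro n hn
  rw [map_add, h1 n hn, h2 n hn, add_zero]

theorem Supp.congr {r s : ℕ} {φ : K⟦X⟧} (h1 : Supp r φ) (h : r % 5 = s % 5) : Supp s φ := by
  intro n hn
  exact h1 n (by omega)

theorem supp_monomial {a b c : K⟦X⟧} (ha : Supp 0 a) (hb : Supp 1 b) (hc : Supp 2 c)
    (i j k : ℕ) : Supp (j + 2 * k) (a ^ i * b ^ j * c ^ k) :=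
  (((ha.pow i).mul (hb.pow j)).mul (hc.pow k)).congr (by congr 1; ring)

theorem main_series {ζ : K} (hζ : 1 + ζ + ζ ^ 2 + ζ ^ 3 + ζ ^ 4 = 0) (P B₁ B₂ : K⟦X⟧)
    (hP : P * pentagonalSeries K = 1)
    (hB1 : B₁ * pentagonalSeries K = expand 5 (by norm_num) (pentagonalSeries K) ^ 2)
    (hB2 : B₂ * pentagonalSeries K = expand 5 (by norm_num) (pentagonalSeries K) ^ 4)
    (m : ℕ) :
    (((m + 1) % 5 = 1 ∨ (m + 1) % 5 = 3) → coeff (5 * m + 4) B₁ = coeff (m + 1) (P ^ 3)) ∧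
    (((m + 1) % 5 = 1 ∨ (m + 1) % 5 = 2) → coeff (5 * m + 4) B₂ = coeff (m + 1) P) := by
  have h2 : (2 : K⟦X⟧) = 0 := two_ps
  set F := pentagonalSeries K with hF
  set f := expand 5 (by norm_num) F with hf
  set h := expand 5 (by norm_num) f with hh
  obtain ⟨e1, e2, e3, e4, e5⟩ := relations hζ F f h _ _ _ hF hf hh rfl rfl rfl
  have sa := supp_comp 0 (by norm_num) F
  have sb := supp_comp 1 (by norm_num) F
  have sc := supp_comp 2 (by norm_num) F
  set a := comp 0 F
  set b := comp 1 F
  set c := comp 2 F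
  have sf : Supp 0 f := supp_expand F
  have sh : Supp 0 h := supp_expand f
  set p := expand 5 (by norm_num) P with hp
  have sp : Supp 0 p := supp_expand P
  have hpf : p * f = 1 := by rw [hp, hf, ← map_mul, hP, map_one]
  have mon := supp_monomial sa sb sc
  have hFG := id_FG h2 e2
  have hG2 := id_G2 h2 e2
  have hH := id_H h2 e2
  have hT := id_T h2 e2
  rw [← e1] at hFG
  rw [← hG2, e5] at hH
  rw [← hG2, ← hH] at hT
  set G := a ^ 4 + a ^ 3 * b + a * b ^ 3 + b ^ 4 + b ^ 3 * c + b * c ^ 3 + c ^ 4 with hG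
  have hPf : P * f ^ 6 = h * G := by
    rw [← e4, ← hFG]
    linear_combination h * G * hP
  have hP' : P = p ^ 6 * h * G := by
    have : p ^ 6 * f ^ 6 = 1 := by rw [← mul_pow, hpf, one_pow]
    linear_combination p ^ 6 * hPf - P * this
  have hb1 : B₁ = p ^ 4 * h * G := by
    have e : B₁ = P * f ^ 2 := by linear_combination P * hB1 - B₁ * hP
    have : p ^ 2 * f ^ 2 = 1 := by rw [← mul_pow, hpf, one_pow]
    rw [e, hP']
    linear_combination p ^ 4 * h * G * this
  have hb2 : B₂ = p ^ 2 * h * G := by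
    have e : B₂ = P * f ^ 4 := by linear_combination P * hB2 - B₂ * hP
    have : p ^ 4 * f ^ 4 = 1 := by rw [← mul_pow, hpf, one_pow]
    rw [e, hP']
    linear_combination p ^ 2 * h * G * this
  have coeffG : ∀ e : K⟦X⟧, coeff (5 * m + 4) (expand 5 (by norm_num) e * h * G) =
      coeff (m + 1) (X * (e * f ^ 5)) := by
    intro e
    have se : Supp 0 (expand 5 (by norm_num) e * h) := (supp_expand e).mul sh
    rw [coeff_G_part (b := b ^ 4) (p0 := a ^ 4 + b ^ 3 * c) (p1 := a ^ 3 * b) (p2 := b * c ^ 3)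
      (p3 := a * b ^ 3 + c ^ 4) se (by rw [hG]; ring)]
    · have : expand 5 (by norm_num) e * h * b ^ 4 =
          X ^ 4 * expand 5 (by norm_num) (e * f ^ 5) := by
        rw [map_mul, map_pow, ← hh, e3]; ring
      rw [this, coeff_X_pow_mul, coeff_succ_X_mul, coeff_expand_mul]
    · exact Supp.add ((sa.pow 4).congr (by norm_num)) (((sb.pow 3).mul sc).congr (by norm_num))
    · exact ((sa.pow 3).mul sb).congr (by norm_num)
    · exact (sb.mul (sc.pow 3)).congr (by norm_num)
    · exact Supp.add ((sa.mul (sb.pow 3)).congr (by norm_num)) ((sc.pow 4).congr (by norm_num))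
  have neg : ∀ x y : K, x + y = 0 → x = y := fun x y hxy => by
    rw [← CharTwo.neg_eq y]; exact eq_neg_of_add_eq_zero_left hxy
  have hf5 : p ^ 5 * f ^ 5 = 1 := by rw [← mul_pow, hpf, one_pow]
  constructor
  · intro hm
    have : B₁ = expand 5 (by norm_num) (P ^ 4) * h * G := by rw [map_pow, ← hp, hb1]
    rw [this, coeffG]
    apply neg
    rw [← map_add]
    have hs : X * (P ^ 4 * f ^ 5) + P ^ 3 = p ^ 19 * h ^ 3 * (G ^ 2 * (b * G ^ 2 + f * G)) := by
      rw [hP', e3]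
      linear_combination X * p ^ 19 * h ^ 4 * G ^ 4 * hf5 - p ^ 18 * h ^ 3 * G ^ 3 * hpf
    rw [hs, hT]
    have s0 : Supp 0 (p ^ 19 * h ^ 3) := ((sp.pow 19).mul (sh.pow 3)).congr (by norm_num)
    have hz : ∀ i j k : ℕ, ((j + 2 * k) % 5 = 0 ∨ (j + 2 * k) % 5 = 2 ∨ (j + 2 * k) % 5 = 4) →
        coeff (m + 1) (p ^ 19 * h ^ 3 * (a ^ i * b ^ j * c ^ k)) = 0 := fun i j k hh =>
      (s0.mul (mon i j k)) _ (by omega)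
    have z1 := hz 17 0 0 (by norm_num)
    have z2 := hz 15 2 0 (by norm_num)
    have z3 := hz 13 4 0 (by norm_num)
    have z4 := hz 12 5 0 (by norm_num)
    have z5 := hz 10 7 0 (by norm_num)
    have z6 := hz 8 9 0 (by norm_num)
    have z7 := hz 2 15 0 (by norm_num)
    have z8 := hz 0 17 0 (by norm_num)
    have z9 := hz 0 15 2 (by norm_num)
    have z10 := hz 0 9 8 (by norm_num)
    have z11 := hz 0 7 10 (by norm_num)
    have z12 := hz 0 5 12 (by norm_num)
    have z13 := hz 0 4 13 (by norm_num)
    have z14 := hz 0 2 15 (by norm_num)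
    have z15 := hz 0 0 17 (by norm_num)
    simp only [pow_zero, mul_one, one_mul, mul_assoc] at z1 z2 z3 z4 z5 z6 z7 z8 z9 z10 z11 z12 z13 z14 z15
    simp only [mul_add, map_add, mul_assoc, z1, z2, z3, z4, z5, z6, z7, z8, z9, z10, z11, z12,
      z13, z14, z15, add_zero]
  · intro hm
    have : B₂ = expand 5 (by norm_num) (P ^ 2) * h * G := by rw [map_pow, ← hp, hb2]
    rw [this, coeffG]
    apply neg
    rw [← map_add]
    have hs : X * (P ^ 2 * f ^ 5) + P = p ^ 7 * h * (b * G ^ 2 + f * G) := by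
      rw [hP', e3]
      linear_combination X * p ^ 7 * h ^ 2 * G ^ 2 * hf5 - p ^ 6 * h * G * hpf
    rw [hs, hH]
    have s0 : Supp 0 (p ^ 7 * h) := ((sp.pow 7).mul sh).congr (by norm_num)
    have hz : ∀ i j k : ℕ, ((j + 2 * k) % 5 = 0 ∨ (j + 2 * k) % 5 = 3 ∨ (j + 2 * k) % 5 = 4) →
        coeff (m + 1) (p ^ 7 * h * (a ^ i * b ^ j * c ^ k)) = 0 := fun i j k hh =>
      (s0.mul (mon i j k)) _ (by omega)
    have z1 := hz 9 0 0 (by norm_num)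
    have z2 := hz 5 4 0 (by norm_num)
    have z3 := hz 4 5 0 (by norm_num)
    have z4 := hz 1 8 0 (by norm_num)
    have z5 := hz 0 9 0 (by norm_num)
    have z6 := hz 0 8 1 (by norm_num)
    have z7 := hz 0 5 4 (by norm_num)
    have z8 := hz 0 4 5 (by norm_num)
    have z9 := hz 0 0 9 (by norm_num)
    simp only [pow_zero, pow_one, mul_one, one_mul, mul_assoc] at z1 z2 z3 z4 z5 z6 z7 z8 z9
    simp only [mul_add, map_add, mul_assoc, z1, z2, z3, z4, z5, z6, z7, z8, z9, add_zero]

end Final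

section Counting

theorem regular_card (m n : ℕ) :
    numRegularPartitions m n = (Nat.Partition.restricted n (¬ m ∣ ·)).card := by
  classical
  rw [numRegularPartitions, Nat.card_eq_fintype_card, Fintype.card_subtype]
  rfl

theorem multi_card (K : Type*) [Field K] (t n : ℕ) :
    (numMultipartitions t n : K) =
      coeff n ((PowerSeries.mk fun n ↦ (Fintype.card n.Partition : K)) ^ t) := by
  classical
  have h1 : (PowerSeries.mk fun n ↦ (Fintype.card n.Partition : K)) ^ t =
      ∏ _i : Fin t, (PowerSeries.mk fun n ↦ (Fintype.card n.Partition : K)) := by simp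
  rw [h1, coeff_prod]
  let e : {f : Fin t → Σ k : ℕ, k.Partition // (∑ i, (f i).1) = n} ≃
      Σ l : {l : Fin t →₀ ℕ // l ∈ Finset.finsuppAntidiag Finset.univ n},
        ∀ i, (l.1 i).Partition :=
    { toFun := fun f => ⟨⟨Finsupp.equivFunOnFinite.symm fun i => (f.1 i).1, by
          simpa [Finset.mem_finsuppAntidiag] using f.2⟩, fun i => (f.1 i).2⟩
      invFun := fun x => ⟨fun i => ⟨x.1.1 i, x.2 i⟩, (Finset.mem_finsuppAntidiag.1 x.1.2).1⟩
      left_inv := fun f => rfl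
      right_inv := by
        rintro ⟨⟨l, hl⟩, p⟩
        obtain ⟨g, rfl⟩ := Finsupp.equivFunOnFinite.symm.surjective l
        rfl }
  rw [numMultipartitions, Nat.card_congr e, Nat.card_eq_fintype_card, Fintype.card_sigma]
  simp only [Fintype.card_pi, coeff_mk]
  rw [← Finset.sum_coe_sort (Finset.finsuppAntidiag Finset.univ n)]
  push_cast
  rfl

end Counting

end RegPart

theorem stmt_0 (n : ℕ) :
    (∀ B ∈ ({1, 3} : Finset ℕ),
      numRegularPartitions 10 (25 * n + 5 * B - 1) ≡
        numMultipartitions 3 (5 * n + B) [MOD 2]) ∧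
    (∀ B ∈ ({1, 2} : Finset ℕ),
      numRegularPartitions 20 (25 * n + 5 * B - 1) ≡
        numMultipartitions 1 (5 * n + B) [MOD 2]) := by
  classical
  let K := AlgebraicClosure (ZMod 2)
  have hchar : CharP K 2 := charP_of_injective_algebraMap
    (algebraMap (ZMod 2) K).injective 2
  let _ : TopologicalSpace K := ⊥
  have _ : DiscreteTopology K := ⟨rfl⟩
  obtain ⟨ζ, hζ⟩ : ∃ ζ : K, 1 + ζ + ζ ^ 2 + ζ ^ 3 + ζ ^ 4 = 0 := by
    obtain ⟨ζ, h⟩ := IsAlgClosed.exists_root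
      (1 + Polynomial.X + Polynomial.X ^ 2 + Polynomial.X ^ 3 + Polynomial.X ^ 4 : Polynomial K)
      (by
        have : (1 + Polynomial.X + Polynomial.X ^ 2 + Polynomial.X ^ 3 + Polynomial.X ^ 4 :
          Polynomial K).degree = 4 := by compute_degree!
        rw [this]; norm_num)
    exact ⟨ζ, by simpa [Polynomial.IsRoot] using h⟩
  have key := RegPart.main_series hζ _ _ _ (RegPart.partition_mul (K := K))
    ((RegPart.regular_mul (K := K) 10 (by norm_num)).trans
      (RegPart.expand_two_mul 5 (by norm_num) (by norm_num)))
    ((RegPart.regular_mul (K := K) 20 (by norm_num)).trans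
      ((RegPart.expand_two_mul 10 (by norm_num) (by norm_num)).trans (by
        rw [show (4 : ℕ) = 2 * 2 from rfl, pow_mul]
        congr 1
        exact RegPart.expand_two_mul 5 (by norm_num) (by norm_num))))
  have fin : ∀ x y : ℕ, (x : K) = y → x ≡ y [MOD 2] := fun x y h =>
    (CharP.natCast_eq_natCast K 2).1 h
  constructor
  · intro B hB
    have hB' : B = 1 ∨ B = 3 := by simpa using hB
    apply fin
    have k1 := (key (5 * n + B - 1)).1 (by omega)
    rw [show 5 * (5 * n + B - 1) + 4 = 25 * n + 5 * B - 1 by omega,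
      show 5 * n + B - 1 + 1 = 5 * n + B by omega, PowerSeries.coeff_mk] at k1
    rw [RegPart.regular_card, RegPart.multi_card K, ← k1]
  · intro B hB
    have hB' : B = 1 ∨ B = 2 := by simpa using hB
    apply fin
    have k1 := (key (5 * n + B - 1)).2 (by omega)
    rw [show 5 * (5 * n + B - 1) + 4 = 25 * n + 5 * B - 1 by omega,
      show 5 * n + B - 1 + 1 = 5 * n + B by omega, PowerSeries.coeff_mk] at k1
    rw [RegPart.regular_card, RegPart.multi_card K, pow_one, ← k1]
end

section
/- For every natural number n: for every B in {1, 5, 6, 7, 9}, b_22(121n + 11B − 5) ≡ p_9(11n + B) (mod 2); for every B in {1, 2, 3, 7, 10}, b_44(121n + 11B − 5) ≡ p_7(11n + B) (mod 2); and for every B in {2, 3, 4, 6, 9}, b_88(121n + 11B − 5) ≡ p_3(11n + B) (mod 2). -/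
lemma ncard_double {α : Type*} (S T : Set α) (hS : S.Finite) (σ : α → α)
    (hσ : ∀ x, σ (σ x) = x) (hmap : ∀ x ∈ S, σ x ∈ S) (hT : T ⊆ S)
    (h1 : ∀ x ∈ T, σ x ∉ T) (h2 : ∀ x ∈ S, x ∈ T ∨ σ x ∈ T) : S.ncard = 2 * T.ncard := by
  have hinj : Function.Injective σ := Function.LeftInverse.injective hσ
  have hU : S = T ∪ σ '' T := by
    ext x; constructor
    · intro hx
      rcases h2 x hx with h | h
      · exact Or.inl h
      · exact Or.inr ⟨σ x, h, hσ x⟩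
    · rintro (h | ⟨y, hy, rfl⟩)
      · exact hT h
      · exact hmap y (hT hy)
  have hd : Disjoint T (σ '' T) := by
    rw [Set.disjoint_right]
    rintro _ ⟨y, hy, rfl⟩
    exact h1 y hy
  have hf : T.Finite := hS.subset hT
  rw [hU, Set.ncard_union_eq hd hf (hf.image σ), Set.ncard_image_of_injective _ hinj]
  ring

lemma ncard_split {α : Type*} (S : Set α) (hS : S.Finite) (p : α → Prop) :
    S.ncard = {x ∈ S | p x}.ncard + {x ∈ S | ¬ p x}.ncard := by
  rw [← Set.ncard_union_eq ?_ (hS.subset (by grind)) (hS.subset (by grind))]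
  · congr 1; ext x; simp only [Set.mem_union, Set.mem_ofPred_eq]; tauto
  · rw [Set.disjoint_left]; rintro x ⟨_, h⟩ ⟨_, h'⟩; exact h' h

/-- finiteness of solution sets of a positive binary form -/
lemma form_finite (k : ℤ) (hk : 1 ≤ k) (M : ℤ) (p : ℤ → ℤ → Prop)
    (hp : ∀ u v, p u v → u ^ 2 + k * v ^ 2 ≤ M) : {x : ℤ × ℤ | p x.1 x.2}.Finite := by
  apply (Set.finite_Icc ((-M, -M) : ℤ × ℤ) (M, M)).subset
  rintro ⟨u, v⟩ h
  have := hp u v h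
  simp only [Set.mem_Icc, Prod.mk_le_mk]
  have hu : u ^ 2 ≤ M := by nlinarith [sq_nonneg v]
  have hv : v ^ 2 ≤ M := by nlinarith [sq_nonneg u, sq_nonneg v]
  have key : ∀ w : ℤ, w ^ 2 ≤ M → -M ≤ w ∧ w ≤ M := by
    intro w hw
    constructor
    · have : -w ≤ w ^ 2 := by
        rcases le_or_gt 0 w with h | h <;> nlinarith
      linarith
    · have : w ≤ w ^ 2 := by
        rcases le_or_gt w 0 with h | h <;> nlinarith
      linarith
  exact ⟨⟨(key u hu).1, (key v hv).1⟩, (key u hu).2, (key v hv).2⟩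

/-- a set symmetric under both sign changes, avoiding the axes -/
lemma ncard_four (p : ℤ → ℤ → Prop) (hf : {x : ℤ × ℤ | p x.1 x.2}.Finite)
    (h1 : ∀ u v, p u v → p (-u) v) (h2 : ∀ u v, p u v → p u (-v))
    (h0 : ∀ u v, p u v → u ≠ 0 ∧ v ≠ 0) :
    {x : ℤ × ℤ | p x.1 x.2}.ncard = 4 * {x : ℤ × ℤ | p x.1 x.2 ∧ 0 < x.1 ∧ 0 < x.2}.ncard := by
  rw [ncard_double {x : ℤ × ℤ | p x.1 x.2} {x : ℤ × ℤ | p x.1 x.2 ∧ 0 < x.1} hf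
    (fun x => (-x.1, x.2)) (by simp) (fun x hx => h1 _ _ hx) (fun x hx => hx.1)
    (by rintro x ⟨_, hx⟩ ⟨_, h⟩; simp at h; omega)
    (by
      intro x hx
      have := h0 _ _ hx
      rcases lt_or_gt_of_ne this.1 with h | h
      · right; exact ⟨h1 _ _ hx, by simpa using h⟩
      · left; exact ⟨hx, h⟩)]
  rw [ncard_double {x : ℤ × ℤ | p x.1 x.2 ∧ 0 < x.1} {x : ℤ × ℤ | p x.1 x.2 ∧ 0 < x.1 ∧ 0 < x.2}
    (hf.subset (fun x hx => hx.1))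
    (fun x => (x.1, -x.2)) (by simp) (fun x hx => ⟨h2 _ _ hx.1, hx.2⟩) (fun x hx => ⟨hx.1, hx.2.1⟩)
    (by rintro x ⟨_, _, hx⟩ ⟨_, _, h⟩; simp at h; omega)
    (by
      rintro x ⟨hx, hx1⟩
      have := h0 _ _ hx
      rcases lt_or_gt_of_ne this.2 with h | h
      · right; exact ⟨h2 _ _ hx, hx1, by simpa using h⟩
      · left; exact ⟨hx, hx1, h⟩)]
  ring

/-- full count for the form `u^2 + k v^2`. -/
lemma ncard_form (k : ℤ) (hk : 1 ≤ k) (M : ℤ) (hM : 0 < M) :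
    {x : ℤ × ℤ | x.1 ^ 2 + k * x.2 ^ 2 = M}.ncard =
      4 * {x : ℤ × ℤ | (x.1 ^ 2 + k * x.2 ^ 2 = M ∧ x.1 ≠ 0 ∧ x.2 ≠ 0) ∧ 0 < x.1 ∧ 0 < x.2}.ncard
      + 2 * {x : ℤ | x ^ 2 = M ∧ 0 < x}.ncard + 2 * {x : ℤ | k * x ^ 2 = M ∧ 0 < x}.ncard := by
  have hf := form_finite k hk M (fun u v => u ^ 2 + k * v ^ 2 = M) (fun u v h => h.le)
  rw [ncard_split _ hf (fun x => x.1 ≠ 0 ∧ x.2 ≠ 0)]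
  rw [ncard_split {x ∈ {x : ℤ × ℤ | x.1 ^ 2 + k * x.2 ^ 2 = M} | ¬ (x.1 ≠ 0 ∧ x.2 ≠ 0)}
    (hf.subset (fun x hx => hx.1)) (fun x => x.2 = 0)]
  have e1 := ncard_four (fun u v => u ^ 2 + k * v ^ 2 = M ∧ u ≠ 0 ∧ v ≠ 0)
    (hf.subset (fun x hx => hx.1)) (by simp) (by simp) (by grind)
  have e2 : {x ∈ {x ∈ {x : ℤ × ℤ | x.1 ^ 2 + k * x.2 ^ 2 = M} | ¬ (x.1 ≠ 0 ∧ x.2 ≠ 0)} | x.2 = 0}.ncard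
      = 2 * {x : ℤ | x ^ 2 = M ∧ 0 < x}.ncard := by
    rw [ncard_double _ ((fun x : ℤ => ((x, 0) : ℤ × ℤ)) '' {x : ℤ | x ^ 2 = M ∧ 0 < x})
      (hf.subset (fun x hx => hx.1.1)) (fun x => (-x.1, x.2)) (by simp) (by simp)]
    · rw [Set.ncard_image_of_injective _ (fun a b h => by simpa using h)]
    · rintro _ ⟨x, ⟨hx, h0⟩, rfl⟩; simp [hx]
    · rintro _ ⟨x, ⟨hx, h0⟩, rfl⟩; simp; intros; omega
    · rintro ⟨x, y⟩ ⟨⟨hx, h⟩, h0⟩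
      simp only [Set.mem_ofPred_eq] at hx h h0
      subst h0
      have hx0 : x ≠ 0 := by rintro rfl; simp at hx; omega
      rcases lt_or_gt_of_ne hx0 with h | h
      · right; exact ⟨-x, ⟨by simpa using hx, by omega⟩, rfl⟩
      · left; exact ⟨x, ⟨by simpa using hx, by omega⟩, rfl⟩
  have e3 : {x ∈ {x ∈ {x : ℤ × ℤ | x.1 ^ 2 + k * x.2 ^ 2 = M} | ¬ (x.1 ≠ 0 ∧ x.2 ≠ 0)} | ¬ x.2 = 0}.ncard
      = 2 * {x : ℤ | k * x ^ 2 = M ∧ 0 < x}.ncard := by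
    rw [ncard_double _ ((fun x : ℤ => ((0, x) : ℤ × ℤ)) '' {x : ℤ | k * x ^ 2 = M ∧ 0 < x})
      (hf.subset (fun x hx => hx.1.1)) (fun x => (x.1, -x.2)) (by simp) (by simp)]
    · rw [Set.ncard_image_of_injective _ (fun a b h => by simpa using h)]
    · rintro _ ⟨x, ⟨hx, h0⟩, rfl⟩; simp [hx]; omega
    · rintro _ ⟨x, ⟨hx, h0⟩, rfl⟩; simp; intros; omega
    · rintro ⟨x, y⟩ ⟨⟨hx, h⟩, h0⟩
      simp only [Set.mem_ofPred_eq] at hx h h0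
      have hx0 : x = 0 := by tauto
      subst hx0
      rcases lt_or_gt_of_ne h0 with h | h
      · right; exact ⟨-y, ⟨by simpa using hx, by omega⟩, rfl⟩
      · left; exact ⟨y, ⟨by simpa using hx, by omega⟩, rfl⟩
  rw [e2, e3]
  have e1' : {x ∈ {x : ℤ × ℤ | x.1 ^ 2 + k * x.2 ^ 2 = M} | x.1 ≠ 0 ∧ x.2 ≠ 0}.ncard = _ := e1
  rw [e1']
  ring

/-- bijection lemma with explicit inverse -/
lemma ncard_bij {α β : Type*} (S : Set α) (T : Set β) (f : α → β) (g : β → α)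
    (hf : ∀ x ∈ S, f x ∈ T) (hg : ∀ y ∈ T, g y ∈ S) (hgf : ∀ x ∈ S, g (f x) = x)
    (hfg : ∀ y ∈ T, f (g y) = y) : S.ncard = T.ncard := by
  have : T = f '' S := by
    ext y; constructor
    · intro hy; exact ⟨g y, hg y hy, hfg y hy⟩
    · rintro ⟨x, hx, rfl⟩; exact hf x hx
  rw [this, Set.InjOn.ncard_image]
  intro a ha b hb h
  rw [← hgf a ha, ← hgf b hb, h]

def tri (i : ℕ) : ℕ := i * (i + 1) / 2

lemma two_tri (i : ℕ) : 2 * (tri i : ℤ) = i * (i + 1) := by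
  have : 2 * tri i = i * (i + 1) := Nat.two_mul_div_two_of_even (Nat.even_mul_succ_self i)
  exact_mod_cast this

lemma odd_sq8 (x : ℤ) (h : x % 2 = 1) : ∃ t, x ^ 2 = 8 * t + 1 := by
  obtain ⟨k, rfl⟩ : ∃ k, x = 2 * k + 1 := ⟨x / 2, by omega⟩
  obtain ⟨t, ht⟩ := Int.even_mul_succ_self k
  exact ⟨t, by linarith⟩

lemma even_sq4 (x : ℤ) (h : x % 2 = 0) : ∃ t, x ^ 2 = 4 * t := by
  obtain ⟨k, rfl⟩ : ∃ k, x = 2 * k := ⟨x / 2, by omega⟩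
  exact ⟨k ^ 2, by ring⟩

lemma tri_count (E : ℕ) (a b : ℕ) (c : ℤ) (M : ℤ) (ha : (c = a)) (hM : M = 8 * ((E : ℤ) - b) + c) :
    {i : ℕ | a * tri i + b = E}.ncard = {x : ℤ | c * x ^ 2 = M ∧ x % 2 = 1 ∧ 0 < x}.ncard := by
  apply ncard_bij _ _ (fun i : ℕ => (2 * i + 1 : ℤ)) (fun x => (x / 2).toNat)
  · intro i hi
    have hi' : (a : ℤ) * tri i + b = E := by exact_mod_cast hi
    refine ⟨?_, by omega, by omega⟩
    rw [hM, ha, ← hi']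
    linear_combination (-4 * (a : ℤ)) * two_tri i
  · rintro x ⟨hx, h2, h0⟩
    obtain ⟨k, rfl⟩ : ∃ k, x = 2 * k + 1 := ⟨x / 2, by omega⟩
    have hk : (2 * k + 1) / 2 = k := by omega
    rw [hk]
    lift k to ℕ using (by omega)
    simp only [Int.toNat_natCast, Set.mem_ofPred_eq]
    have := two_tri k
    zify
    rw [← ha]
    have h4 : 8 * (c * (tri k : ℤ) + b) = 8 * (E : ℤ) := by
      linear_combination hx + 4 * c * this + hM
    omega
  · intro i hi
    omega
  · rintro x ⟨hx, h2, h0⟩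
    omega

theorem psi_count (E : ℕ) :
    {p : ℤ × ℤ | pentagonal p.1 + 2 * pentagonal p.2 = E}.ncard ≡ {i : ℕ | tri i = E}.ncard [MOD 2] := by
  set M : ℤ := 8 * E + 1 with hM
  have hf := form_finite 2 (by norm_num) M (fun u v => u ^ 2 + 2 * v ^ 2 = M) (fun u v h => h.le)
  have key : ∀ u v : ℤ, u ^ 2 + 2 * v ^ 2 = M → u % 2 = 1 ∧ v % 2 = 0 := by
    intro u v h
    rcases Int.emod_two_eq_zero_or_one u with hu | hu
    · obtain ⟨t, ht⟩ := even_sq4 u hu; omega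
    · obtain ⟨t, ht⟩ := odd_sq8 u hu
      refine ⟨hu, ?_⟩
      rcases Int.emod_two_eq_zero_or_one v with hv | hv
      · exact hv
      · obtain ⟨s, hs⟩ := odd_sq8 v hv; omega
  have hA : {p : ℤ × ℤ | pentagonal p.1 + 2 * pentagonal p.2 = E}.ncard =
      {x : ℤ × ℤ | x.1 ^ 2 + 2 * x.2 ^ 2 = M ∧ (x.1 + x.2) % 3 = 2}.ncard := by
    apply ncard_bij _ _ (fun p => (2 * p.1 + 4 * p.2 - 1, 2 * p.2 - 2 * p.1))
      (fun x => ((x.1 + x.2 + 1) / 6 - x.2 / 2, (x.1 + x.2 + 1) / 6))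
    · rintro ⟨n, m⟩ h
      have h' : (pentagonal n : ℤ) + 2 * pentagonal m = E := by exact_mod_cast h
      refine ⟨?_, by dsimp only; omega⟩
      dsimp only
      rw [hM, ← h']
      linear_combination (-4) * two_mul_natCast_pentagonal n - 8 * two_mul_natCast_pentagonal m
    · rintro ⟨u, v⟩ ⟨h, h3⟩
      dsimp only at h h3
      obtain ⟨h1, h2⟩ := key u v h
      obtain ⟨m, hm⟩ : ∃ m, u + v + 1 = 6 * m := ⟨(u + v + 1) / 6, by omega⟩
      obtain ⟨w, rfl⟩ : ∃ w, v = 2 * w := ⟨v / 2, by omega⟩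
      have e1 : (u + 2 * w + 1) / 6 = m := by omega
      have e2 : 2 * w / 2 = w := by omega
      have hu : u = 6 * m - 2 * w - 1 := by omega
      simp only [e1, e2, Set.mem_ofPred_eq]
      zify
      have : 8 * ((pentagonal (m - w) : ℤ) + 2 * pentagonal m) = 8 * E := by
        rw [hu] at h
        linear_combination 4 * two_mul_natCast_pentagonal (m - w) + 8 * two_mul_natCast_pentagonal m + h + hM
      omega
    · rintro ⟨n, m⟩ h
      simp only [Prod.mk.injEq]
      omega
    · rintro ⟨u, v⟩ ⟨h, h3⟩
      dsimp only at h h3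
      obtain ⟨h1, h2⟩ := key u v h
      simp only [Prod.mk.injEq]
      omega
  have hZ : {x : ℤ × ℤ | x.1 ^ 2 + 2 * x.2 ^ 2 = M ∧ (x.1 + x.2) % 3 = 0}.ncard =
      {x : ℤ × ℤ | 3 * (x.1 ^ 2 + 2 * x.2 ^ 2) = M}.ncard := by
    apply ncard_bij _ _ (fun x => ((x.1 + x.2) / 3 - x.2, (x.1 + x.2) / 3))
      (fun x => (2 * x.2 + x.1, x.2 - x.1))
    · rintro ⟨u, v⟩ ⟨h, h3⟩
      dsimp only at h h3
      obtain ⟨w, hw⟩ : ∃ w, u + v = 3 * w := ⟨(u + v) / 3, by omega⟩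
      have e1 : (u + v) / 3 = w := by omega
      simp only [e1, Set.mem_ofPred_eq]
      have hu : u = 3 * w - v := by omega
      rw [hu] at h
      linear_combination h
    · rintro ⟨z, w⟩ h
      simp only [Set.mem_ofPred_eq] at h
      refine ⟨?_, by dsimp only; omega⟩
      dsimp only
      linear_combination h
    · rintro ⟨u, v⟩ ⟨h, h3⟩
      dsimp only at h h3
      simp only [Prod.mk.injEq]
      omega
    · rintro ⟨z, w⟩ h
      simp only [Prod.mk.injEq]
      omega
  have hZ4 := ncard_four (fun u v => 3 * (u ^ 2 + 2 * v ^ 2) = M)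
    (form_finite 2 (by norm_num) M (fun u v => 3 * (u ^ 2 + 2 * v ^ 2) = M) (fun u v h => by nlinarith [sq_nonneg u, sq_nonneg v]))
    (by simp) (by simp) (by
      intro u v h
      rcases Int.emod_two_eq_zero_or_one u with hu | hu
      · obtain ⟨t, ht⟩ := even_sq4 u hu; omega
      · obtain ⟨t, ht⟩ := odd_sq8 u hu
        rcases Int.emod_two_eq_zero_or_one v with hv | hv
        · obtain ⟨s, hs⟩ := even_sq4 v hv; omega
        · omega)
  have hW := ncard_form 2 (by norm_num) M (by omega)
  have hs2 : {x : ℤ | 2 * x ^ 2 = M ∧ 0 < x} = ∅ := by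
    ext x; simp; intro h; omega
  rw [hs2, Set.ncard_empty] at hW
  have hT := tri_count E 1 0 1 M (by norm_num) (by rw [hM]; push_cast; ring)
  have hT' : {x : ℤ | 1 * x ^ 2 = M ∧ x % 2 = 1 ∧ 0 < x} = {x : ℤ | x ^ 2 = M ∧ 0 < x} := by
    ext x
    simp only [Set.mem_ofPred_eq, one_mul]
    constructor
    · tauto
    · rintro ⟨h, h0⟩
      exact ⟨h, (key x 0 (by linarith)).1, h0⟩
  rw [hT'] at hT
  simp only [one_mul, add_zero] at hT
  rw [ncard_split _ hf (fun x => (x.1 + x.2) % 3 = 0)] at hW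
  have hB := ncard_double {x ∈ {x : ℤ × ℤ | x.1 ^ 2 + 2 * x.2 ^ 2 = M} | ¬ (x.1 + x.2) % 3 = 0}
    {x : ℤ × ℤ | x.1 ^ 2 + 2 * x.2 ^ 2 = M ∧ (x.1 + x.2) % 3 = 2} (hf.subset (fun x hx => hx.1))
    (fun x => (-x.1, -x.2)) (by simp)
    (by rintro x ⟨h, h'⟩; refine ⟨by simpa using h, ?_⟩; dsimp only; omega)
    (by rintro x ⟨h, h'⟩; refine ⟨by simpa using h, ?_⟩; omega)
    (by rintro x ⟨h, h'⟩ ⟨g, g'⟩; dsimp only at g'; omega)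
    (by
      rintro x ⟨h, h'⟩
      by_cases g : (x.1 + x.2) % 3 = 2
      · exact Or.inl ⟨h, g⟩
      · refine Or.inr ⟨by simpa using h, ?_⟩; dsimp only; omega)
  have hZ' : {x ∈ {x : ℤ × ℤ | x.1 ^ 2 + 2 * x.2 ^ 2 = M} | (x.1 + x.2) % 3 = 0}.ncard = _ := hZ
  rw [hZ', hZ4, hB] at hW
  rw [hA, hT]
  unfold Nat.ModEq
  omega

theorem main_count (E : ℕ) :
    {p : ℤ × ℤ | pentagonal p.1 + 11 * pentagonal p.2 = E}.ncard +
      {p : ℕ × ℕ | tri p.1 + 11 * tri p.2 + 1 = E}.ncard +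
      {i : ℕ | 4 * tri i = E}.ncard + {i : ℕ | 44 * tri i + 5 = E}.ncard ≡ 0 [MOD 2] := by
  set N : ℤ := 2 * E + 1 with hN
  have hf := form_finite 11 (by norm_num) (4 * N) (fun u v => u ^ 2 + 11 * v ^ 2 = 4 * N)
    (fun u v h => h.le)
  have hfW : {x : ℤ × ℤ | x.1 ^ 2 + 11 * x.2 ^ 2 = 4 * N ∧ (x.1 + x.2) % 4 = 2}.Finite :=
    hf.subset (fun x hx => hx.1)
  have hA : {p : ℤ × ℤ | pentagonal p.1 + 11 * pentagonal p.2 = E}.ncard =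
      {x : ℤ × ℤ | x.1 ^ 2 + 11 * x.2 ^ 2 = 4 * N ∧ (x.1 + x.2) % 12 = 10}.ncard := by
    apply ncard_bij _ _ (fun p => (p.1 + 11 * p.2 - 2, p.2 - p.1))
      (fun x => ((x.1 + x.2 + 2) / 12 - x.2, (x.1 + x.2 + 2) / 12))
    · rintro ⟨n, m⟩ h
      have h' : (pentagonal n : ℤ) + 11 * pentagonal m = E := by exact_mod_cast h
      refine ⟨?_, by dsimp only; omega⟩
      dsimp only
      rw [hN, ← h']
      linear_combination (-4) * two_mul_natCast_pentagonal n - 44 * two_mul_natCast_pentagonal m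
    · rintro ⟨u, v⟩ ⟨h, h3⟩
      dsimp only at h h3
      obtain ⟨m, hm⟩ : ∃ m, u + v + 2 = 12 * m := ⟨(u + v + 2) / 12, by omega⟩
      have e1 : (u + v + 2) / 12 = m := by omega
      have hu : u = 12 * m - v - 2 := by omega
      simp only [e1, Set.mem_ofPred_eq]
      zify
      have : 8 * ((pentagonal (m - v) : ℤ) + 11 * pentagonal m) = 8 * E := by
        rw [hu] at h
        linear_combination 4 * two_mul_natCast_pentagonal (m - v) +
          44 * two_mul_natCast_pentagonal m + h + 4 * hN
      omega
    · rintro ⟨n, m⟩ h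
      simp only [Prod.mk.injEq]
      omega
    · rintro ⟨u, v⟩ ⟨h, h3⟩
      dsimp only at h h3
      simp only [Prod.mk.injEq]
      omega
  have hZ : {x : ℤ × ℤ | (x.1 ^ 2 + 11 * x.2 ^ 2 = 4 * N ∧ (x.1 + x.2) % 4 = 2) ∧
      (x.1 + x.2) % 3 = 0}.ncard =
      {x : ℤ × ℤ | 3 * (x.1 ^ 2 + 11 * x.2 ^ 2) = 4 * N ∧ x.1 % 2 = 1 ∧ x.2 % 2 = 1}.ncard := by
    apply ncard_bij _ _ (fun x => ((x.1 + x.2) / 6 - 2 * x.2, (x.1 + x.2) / 6))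
      (fun x => (6 * x.2 - (x.2 - x.1) / 2, (x.2 - x.1) / 2))
    · rintro ⟨u, v⟩ ⟨⟨h, h4⟩, h3⟩
      dsimp only at h h3 h4
      obtain ⟨w, hw⟩ : ∃ w, u + v = 6 * w := ⟨(u + v) / 6, by omega⟩
      have e1 : (u + v) / 6 = w := by omega
      simp only [e1, Set.mem_ofPred_eq]
      have hu : u = 6 * w - v := by omega
      rw [hu] at h
      refine ⟨?_, by omega, by omega⟩
      linear_combination h
    · rintro ⟨z, w⟩ ⟨h, h1, h2⟩
      dsimp only at h h1 h2
      obtain ⟨v, hv⟩ : ∃ v, w - z = 2 * v := ⟨(w - z) / 2, by omega⟩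
      have e1 : (w - z) / 2 = v := by omega
      simp only [e1, Set.mem_ofPred_eq]
      have hz : z = w - 2 * v := by omega
      rw [hz] at h
      refine ⟨⟨?_, by omega⟩, by omega⟩
      linear_combination h
    · rintro ⟨u, v⟩ ⟨⟨h, h4⟩, h3⟩
      dsimp only at h h3 h4
      simp only [Prod.mk.injEq]
      omega
    · rintro ⟨z, w⟩ ⟨h, h1, h2⟩
      dsimp only at h h1 h2
      simp only [Prod.mk.injEq]
      omega
  have hZ4 := ncard_four
    (fun u v => 3 * (u ^ 2 + 11 * v ^ 2) = 4 * N ∧ u % 2 = 1 ∧ v % 2 = 1)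
    (form_finite 11 (by norm_num) (4 * N)
      (fun u v => 3 * (u ^ 2 + 11 * v ^ 2) = 4 * N ∧ u % 2 = 1 ∧ v % 2 = 1)
      (fun u v h => by nlinarith [sq_nonneg u, sq_nonneg v, h.1]))
    (by rintro u v ⟨h, h1, h2⟩; exact ⟨by simpa using h, by omega, by omega⟩)
    (by rintro u v ⟨h, h1, h2⟩; exact ⟨by simpa using h, by omega, by omega⟩)
    (by rintro u v ⟨h, h1, h2⟩; constructor <;> omega)
  -- split by residues mod 3
  have hW1 := ncard_split _ hfW (fun x => (x.1 + x.2) % 3 = 0)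
  have hB := ncard_double {x ∈ {x : ℤ × ℤ | x.1 ^ 2 + 11 * x.2 ^ 2 = 4 * N ∧ (x.1 + x.2) % 4 = 2} |
      ¬ (x.1 + x.2) % 3 = 0}
    {x : ℤ × ℤ | x.1 ^ 2 + 11 * x.2 ^ 2 = 4 * N ∧ (x.1 + x.2) % 12 = 10}
    (hf.subset (fun x hx => hx.1.1))
    (fun x => (-x.1, -x.2)) (by simp)
    (by rintro x ⟨⟨h, h4⟩, h'⟩; refine ⟨⟨by simpa using h, ?_⟩, ?_⟩ <;> dsimp only <;> omega)
    (by rintro x ⟨h, h'⟩; refine ⟨⟨by simpa using h, ?_⟩, ?_⟩ <;> omega)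
    (by rintro x ⟨h, h'⟩ ⟨g, g'⟩; dsimp only at g'; omega)
    (by
      rintro x ⟨⟨h, h4⟩, h'⟩
      by_cases g : (x.1 + x.2) % 3 = 1
      · exact Or.inl ⟨h, by omega⟩
      · refine Or.inr ⟨by simpa using h, ?_⟩; dsimp only; omega)
  have hZ' : {x ∈ {x : ℤ × ℤ | x.1 ^ 2 + 11 * x.2 ^ 2 = 4 * N ∧ (x.1 + x.2) % 4 = 2} |
      (x.1 + x.2) % 3 = 0}.ncard = _ := hZ
  rw [hZ', hZ4, hB] at hW1
  -- split by parity
  have hW2 := ncard_split _ hfW (fun x => x.1 % 2 = 1)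
  have hO := ncard_four (fun u v => u ^ 2 + 11 * v ^ 2 = 4 * N ∧ u % 2 = 1 ∧ v % 2 = 1)
    (hf.subset (fun x hx => hx.1))
    (by rintro u v ⟨h, h1, h2⟩; exact ⟨by simpa using h, by omega, by omega⟩)
    (by rintro u v ⟨h, h1, h2⟩; exact ⟨by simpa using h, by omega, by omega⟩)
    (by rintro u v ⟨h, h1, h2⟩; constructor <;> omega)
  have hO2 := ncard_double
    {x : ℤ × ℤ | x.1 ^ 2 + 11 * x.2 ^ 2 = 4 * N ∧ x.1 % 2 = 1 ∧ x.2 % 2 = 1}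
    {x ∈ {x : ℤ × ℤ | x.1 ^ 2 + 11 * x.2 ^ 2 = 4 * N ∧ (x.1 + x.2) % 4 = 2} | x.1 % 2 = 1}
    (hf.subset (fun x hx => hx.1)) (fun x => (x.1, -x.2)) (by simp)
    (by rintro x ⟨h, h1, h2⟩; exact ⟨by simpa using h, by dsimp only; omega, by dsimp only; omega⟩)
    (by rintro x ⟨⟨h, h1⟩, h2⟩; exact ⟨h, h2, by omega⟩)
    (by rintro x ⟨⟨h, h1⟩, h2⟩ ⟨⟨h', h1'⟩, h2'⟩; dsimp only at h1'; omega)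
    (by
      rintro x ⟨h, h1, h2⟩
      by_cases g : (x.1 + x.2) % 4 = 2
      · exact Or.inl ⟨⟨h, g⟩, h1⟩
      · exact Or.inr ⟨⟨by simpa using h, by dsimp only; omega⟩, h1⟩)
  have hE : {x ∈ {x : ℤ × ℤ | x.1 ^ 2 + 11 * x.2 ^ 2 = 4 * N ∧ (x.1 + x.2) % 4 = 2} |
      ¬ x.1 % 2 = 1}.ncard = {x : ℤ × ℤ | x.1 ^ 2 + 11 * x.2 ^ 2 = N}.ncard := by
    apply ncard_bij _ _ (fun x => (x.1 / 2, x.2 / 2)) (fun x => (2 * x.1, 2 * x.2))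
    · rintro ⟨u, v⟩ ⟨⟨h, h4⟩, h2⟩
      dsimp only at h h4 h2
      obtain ⟨x, rfl⟩ : ∃ x, u = 2 * x := ⟨u / 2, by omega⟩
      obtain ⟨y, rfl⟩ : ∃ y, v = 2 * y := ⟨v / 2, by omega⟩
      have e1 : 2 * x / 2 = x := by omega
      have e2 : 2 * y / 2 = y := by omega
      simp only [e1, e2, Set.mem_ofPred_eq]
      have : 4 * (x ^ 2 + 11 * y ^ 2) = 4 * N := by linear_combination h
      omega
    · rintro ⟨x, y⟩ h
      simp only [Set.mem_ofPred_eq] at h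
      refine ⟨⟨?_, ?_⟩, ?_⟩
      · dsimp only; linear_combination 4 * h
      · dsimp only
        rcases Int.emod_two_eq_zero_or_one x with hx | hx <;>
        rcases Int.emod_two_eq_zero_or_one y with hy | hy
        · obtain ⟨t, ht⟩ := even_sq4 x hx
          obtain ⟨s, hs⟩ := even_sq4 y hy
          omega
        · omega
        · omega
        · obtain ⟨t, ht⟩ := odd_sq8 x hx
          obtain ⟨s, hs⟩ := odd_sq8 y hy
          omega
      · dsimp only; omega
    · rintro ⟨u, v⟩ ⟨⟨h, h4⟩, h2⟩
      dsimp only at h h4 h2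
      simp only [Prod.mk.injEq]
      omega
    · rintro ⟨x, y⟩ h
      simp only [Prod.mk.injEq]
      omega
  have hF := ncard_form 11 (by norm_num) N (by omega)
  have hT1 := tri_count E 4 0 4 (4 * N) (by norm_num) (by rw [hN]; push_cast; ring)
  have hT2 := tri_count E 44 5 44 (4 * N) (by norm_num) (by rw [hN]; push_cast; ring)
  have hT1' : {x : ℤ | 4 * x ^ 2 = 4 * N ∧ x % 2 = 1 ∧ 0 < x} = {x : ℤ | x ^ 2 = N ∧ 0 < x} := by
    ext x
    simp only [Set.mem_ofPred_eq]
    constructor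
    · rintro ⟨h, h1, h2⟩
      exact ⟨by omega, h2⟩
    · rintro ⟨h, h0⟩
      refine ⟨by omega, ?_, h0⟩
      rcases Int.emod_two_eq_zero_or_one x with hx | hx
      · obtain ⟨t, ht⟩ := even_sq4 x hx; omega
      · exact hx
  have hT2' : {x : ℤ | 44 * x ^ 2 = 4 * N ∧ x % 2 = 1 ∧ 0 < x} =
      {x : ℤ | 11 * x ^ 2 = N ∧ 0 < x} := by
    ext x
    simp only [Set.mem_ofPred_eq]
    constructor
    · rintro ⟨h, h1, h2⟩
      exact ⟨by omega, h2⟩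
    · rintro ⟨h, h0⟩
      refine ⟨by omega, ?_, h0⟩
      rcases Int.emod_two_eq_zero_or_one x with hx | hx
      · obtain ⟨t, ht⟩ := even_sq4 x hx; omega
      · exact hx
  rw [hT1'] at hT1
  rw [hT2'] at hT2
  simp only [add_zero] at hT1
  have hP : {p : ℕ × ℕ | tri p.1 + 11 * tri p.2 + 1 = E}.ncard =
      {x : ℤ × ℤ | (x.1 ^ 2 + 11 * x.2 ^ 2 = 4 * N ∧ x.1 % 2 = 1 ∧ x.2 % 2 = 1) ∧
        0 < x.1 ∧ 0 < x.2}.ncard := by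
    apply ncard_bij _ _ (fun p : ℕ × ℕ => ((2 * p.1 + 1 : ℤ), (2 * p.2 + 1 : ℤ)))
      (fun x => ((x.1 / 2).toNat, (x.2 / 2).toNat))
    · rintro ⟨i, j⟩ h
      have h' : (tri i : ℤ) + 11 * tri j + 1 = E := by exact_mod_cast h
      refine ⟨⟨?_, by dsimp only; omega, by dsimp only; omega⟩, by dsimp only; omega,
        by dsimp only; omega⟩
      dsimp only
      rw [hN, ← h']
      linear_combination (-4) * two_tri i - 44 * two_tri j
    · rintro ⟨x, y⟩ ⟨⟨h, h1, h2⟩, h3, h4⟩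
      dsimp only at h h1 h2 h3 h4
      obtain ⟨k, rfl⟩ : ∃ k, x = 2 * k + 1 := ⟨x / 2, by omega⟩
      obtain ⟨l, rfl⟩ : ∃ l, y = 2 * l + 1 := ⟨y / 2, by omega⟩
      have e1 : (2 * k + 1) / 2 = k := by omega
      have e2 : (2 * l + 1) / 2 = l := by omega
      rw [e1, e2]
      lift k to ℕ using (by omega)
      lift l to ℕ using (by omega)
      simp only [Int.toNat_natCast, Set.mem_ofPred_eq]
      zify
      have : 8 * ((tri k : ℤ) + 11 * tri l + 1) = 8 * (E : ℤ) := by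
        linear_combination h + 4 * two_tri k + 44 * two_tri l + 4 * hN
      omega
    · rintro ⟨i, j⟩ h
      simp only [Prod.mk.injEq]
      omega
    · rintro ⟨x, y⟩ ⟨⟨h, h1, h2⟩, h3, h4⟩
      dsimp only at h h1 h2 h3 h4
      simp only [Prod.mk.injEq]
      omega
  rw [hA, hP, hT1, hT2]
  rw [hE, hF] at hW2
  rw [hO2] at hO
  unfold Nat.ModEq
  omega

section series
open PowerSeries

noncomputable def ex (k : ℕ) [NeZero k] {R : Type*} [CommRing R] : R⟦X⟧ →ₐ[R] R⟦X⟧ :=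
  PowerSeries.expand k (NeZero.ne k)

lemma ex_ex {R : Type*} [CommRing R] (a b c : ℕ) [NeZero a] [NeZero b] [NeZero c] (h : a * b = c)
    (φ : R⟦X⟧) : ex a (ex b φ) = ex c φ := by
  subst h
  exact (PowerSeries.expand_mul a (NeZero.ne a) b (NeZero.ne b) φ).symm

lemma coeff_ex {R : Type*} [CommRing R] (k n : ℕ) [NeZero k] (φ : R⟦X⟧) :
    coeff n (ex k φ) = if k ∣ n then coeff (n / k) φ else 0 :=
  PowerSeries.coeff_expand _ _ _

lemma coeff_ex_mul {R : Type*} [CommRing R] (k n : ℕ) [NeZero k] (φ : R⟦X⟧) :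
    coeff (k * n) (ex k φ) = coeff n φ :=
  PowerSeries.coeff_expand_mul _ _ _ _

lemma sq_eq_ex (φ : (ZMod 2)⟦X⟧) : φ ^ 2 = ex 2 φ := by
  have h := MvPowerSeries.map_frobenius_expand (p := 2) (hp := two_ne_zero) (R := ZMod 2) (f := φ)
  rw [← h, ZMod.frobenius_zmod]
  simp [ex, PowerSeries.expand]

lemma pow4_eq_ex (φ : (ZMod 2)⟦X⟧) : φ ^ 4 = ex 4 φ := by
  rw [← ex_ex 2 2 4 rfl, ← sq_eq_ex, ← sq_eq_ex, ← pow_mul]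

lemma pow8_eq_ex (φ : (ZMod 2)⟦X⟧) : φ ^ 8 = ex 8 φ := by
  rw [← ex_ex 2 4 8 rfl, ← sq_eq_ex, ← pow4_eq_ex, ← pow_mul]

noncomputable def Ser {ι : Type*} (e : ι → ℕ) : (ZMod 2)⟦X⟧ :=
  PowerSeries.mk fun n => ({i | e i = n}.ncard : ZMod 2)

lemma Ser_mul {ι κ : Type*} (e : ι → ℕ) (e' : κ → ℕ) (h : ∀ n, {i | e i = n}.Finite)
    (h' : ∀ n, {i | e' i = n}.Finite) :
    Ser e * Ser e' = Ser (fun p : ι × κ => e p.1 + e' p.2) := by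
  ext n
  rw [PowerSeries.coeff_mul]
  simp only [Ser, PowerSeries.coeff_mk]
  have key : {p : ι × κ | e p.1 + e' p.2 = n} =
      ⋃ x ∈ Finset.HasAntidiagonal.antidiagonal n, ({i | e i = x.1} ×ˢ {j | e' j = x.2}) := by
    ext ⟨i, j⟩
    simp
  have hu := (Finset.finite_toSet (Finset.HasAntidiagonal.antidiagonal n)).ncard_biUnion
    (s := fun x : ℕ × ℕ => ({i | e i = x.1} ×ˢ {j | e' j = x.2}))
    (fun x _ => (h x.1).prod (h' x.2)) ?_
  · rw [finsum_mem_coe_finset] at hu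
    simp only [Finset.mem_coe] at hu
    rw [key, hu]
    push_cast
    refine Finset.sum_congr rfl fun x _ => ?_
    rw [Set.ncard_prod]
    push_cast
    rfl
  · intro x _ y _ hxy
    rw [Function.onFun, Set.disjoint_left]
    rintro ⟨i, j⟩ ⟨h1, h2⟩ ⟨h3, h4⟩
    apply hxy
    simp only [Set.mem_ofPred_eq] at h1 h2 h3 h4
    exact Prod.ext (h1.symm.trans h3) (h2.symm.trans h4)

lemma fin_add {ι κ : Type*} (e : ι → ℕ) (e' : κ → ℕ) (h : ∀ n, {i | e i = n}.Finite)
    (h' : ∀ n, {i | e' i = n}.Finite) (n : ℕ) : {p : ι × κ | e p.1 + e' p.2 = n}.Finite := by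
  have key : {p : ι × κ | e p.1 + e' p.2 = n} =
      ⋃ x ∈ Finset.HasAntidiagonal.antidiagonal n, ({i | e i = x.1} ×ˢ {j | e' j = x.2}) := by
    ext ⟨i, j⟩
    simp
  rw [key]
  exact Set.Finite.biUnion (Finset.finite_toSet _) fun x _ => (h x.1).prod (h' x.2)

lemma ex_Ser {ι : Type*} (k : ℕ) [NeZero k] (e : ι → ℕ) : ex k (Ser e) = Ser (fun i => k * e i) := by
  ext n
  rw [coeff_ex]
  have hk := NeZero.ne k
  split_ifs with h
  · obtain ⟨m, rfl⟩ := h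
    rw [Nat.mul_div_cancel_left _ (Nat.pos_of_ne_zero hk)]
    simp [Ser, hk]
  · simp only [Ser, PowerSeries.coeff_mk]
    have : {i | k * e i = n} = ∅ := by
      ext i
      simp only [Set.mem_ofPred_eq, Set.mem_empty_iff_false, iff_false]
      rintro rfl
      exact h (Dvd.intro _ rfl)
    rw [this]; simp

lemma X_pow_mul_Ser {ι : Type*} (k : ℕ) (e : ι → ℕ) :
    X ^ k * Ser e = Ser (fun i => e i + k) := by
  ext n
  rw [PowerSeries.coeff_X_pow_mul']
  simp only [Ser, PowerSeries.coeff_mk]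
  split_ifs with h
  · have : {i | e i = n - k} = {i | e i + k = n} := by
      ext i; simp only [Set.mem_ofPred_eq]; omega
    rw [this]
  · have : {i | e i + k = n} = ∅ := by
      ext i
      simp only [Set.mem_ofPred_eq, Set.mem_empty_iff_false, iff_false]
      omega
    rw [this]; simp

noncomputable abbrev FF : (ZMod 2)⟦X⟧ := PowerSeries.pentagonalSeries (ZMod 2)

lemma pent_fin (n : ℕ) : {i | pentagonal i = n}.Finite :=
  Set.Subsingleton.finite (fun _ ha _ hb => pentagonal_injective (ha.trans hb.symm))

lemma FF_eq : FF = Ser pentagonal := by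
  ext n
  simp only [Ser, PowerSeries.coeff_mk]
  by_cases h : n ∈ Set.range pentagonal
  · obtain ⟨k, rfl⟩ := h
    have : {i | pentagonal i = pentagonal k} = {k} := by ext; simp
    rw [this, PowerSeries.coeff_pentagonalSeries_pentagonal, Set.ncard_singleton]
    rcases Int.units_eq_one_or (Int.negOnePow k) with h | h <;> rw [h] <;> simp
  · rw [PowerSeries.coeff_pentagonalSeries_eq_zero _ h]
    have : {i | pentagonal i = n} = ∅ := by
      ext i
      simp only [Set.mem_ofPred_eq, Set.mem_empty_iff_false, iff_false]
      exact fun hi => h ⟨i, hi⟩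
    rw [this]; simp

lemma tri_fin (n : ℕ) : {i | tri i = n}.Finite := by
  apply (Set.finite_Iic (2 * n)).subset
  intro i hi
  simp only [Set.mem_ofPred_eq, Set.mem_Iic] at hi ⊢
  have := two_tri i
  rw [hi] at this
  zify
  nlinarith

lemma mul_fin {ι : Type*} (k : ℕ) (hk : k ≠ 0) (e : ι → ℕ) (h : ∀ n, {i | e i = n}.Finite) (n : ℕ) :
    {i | k * e i = n}.Finite := by
  apply (h (n / k)).subset
  intro i hi
  simp only [Set.mem_ofPred_eq] at hi ⊢
  rw [← hi, Nat.mul_div_cancel_left _ (Nat.pos_of_ne_zero hk)]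

lemma FF_cube : FF ^ 3 = Ser tri := by
  have : FF ^ 3 = FF * ex 2 FF := by rw [← sq_eq_ex]; ring
  rw [this, FF_eq, ex_Ser, Ser_mul _ _ pent_fin (mul_fin 2 (by norm_num) _ pent_fin)]
  ext n
  simp only [Ser, PowerSeries.coeff_mk]
  exact (ZMod.natCast_eq_natCast_iff _ _ _).mpr (psi_count n)

theorem modular_eq : FF * ex 11 FF = FF ^ 12 + X * FF ^ 3 * ex 11 FF ^ 3 + X ^ 5 * ex 11 FF ^ 12 := by
  have h12 : FF ^ 12 = Ser (fun i => 4 * tri i) := by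
    rw [← ex_Ser, ← FF_cube, ← pow4_eq_ex, ← pow_mul]
  have e3 : X ^ 5 * ex 11 FF ^ 12 = Ser (fun i => 44 * tri i + 5) := by
    rw [← map_pow, h12, ← ex_Ser, ex_ex 11 4 44 rfl, ex_Ser, X_pow_mul_Ser]
  have e2 : X * FF ^ 3 * ex 11 FF ^ 3 = Ser (fun p : ℕ × ℕ => tri p.1 + 11 * tri p.2 + 1) := by
    rw [← map_pow, FF_cube, mul_assoc, ex_Ser, Ser_mul _ _ tri_fin (mul_fin 11 (by norm_num) _ tri_fin),
      ← pow_one X, X_pow_mul_Ser]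
  have e1 : FF * ex 11 FF = Ser (fun p : ℤ × ℤ => pentagonal p.1 + 11 * pentagonal p.2) := by
    rw [FF_eq, ex_Ser, Ser_mul _ _ pent_fin (mul_fin 11 (by norm_num) _ pent_fin)]
  rw [e1, h12, e2, e3]
  ext n
  have := (ZMod.natCast_eq_natCast_iff _ _ _).mpr (main_count n)
  push_cast at this
  simp only [Ser, map_add, PowerSeries.coeff_mk]
  generalize ({p : ℤ × ℤ | pentagonal p.1 + 11 * pentagonal p.2 = n}.ncard : ZMod 2) = a at *
  generalize ({p : ℕ × ℕ | tri p.1 + 11 * tri p.2 + 1 = n}.ncard : ZMod 2) = b at *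
  generalize ({i : ℕ | 4 * tri i = n}.ncard : ZMod 2) = c at *
  generalize ({i : ℕ | 44 * tri i + 5 = n}.ncard : ZMod 2) = d at *
  revert a b c d
  decide

noncomputable abbrev PP : (ZMod 2)⟦X⟧ := Ser (fun x : (Σ k : ℕ, k.Partition) => x.1)

lemma part_set (n : ℕ) : {x : Σ k : ℕ, k.Partition | x.1 = n} = Set.range (fun p : n.Partition => (⟨n, p⟩ : Σ k : ℕ, k.Partition)) := by
  ext ⟨k, p⟩
  simp only [Set.mem_ofPred_eq, Set.mem_range]
  constructor
  · rintro rfl; exact ⟨p, rfl⟩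
  · rintro ⟨q, hq⟩; cases hq; rfl

lemma part_fin (n : ℕ) : {x : Σ k : ℕ, k.Partition | x.1 = n}.Finite := by
  rw [part_set]; exact Set.finite_range _

lemma multi_fin (t n : ℕ) : {f : Fin t → Σ k : ℕ, k.Partition | (∑ i, (f i).1) = n}.Finite := by
  apply (Set.Finite.pi' (ι := Fin t) (fun _ => (Set.finite_Iic n).biUnion (fun m _ => part_fin m))).subset
  intro f hf
  simp only [Set.mem_ofPred_eq, Set.mem_iUnion, Set.mem_Iic] at hf ⊢
  intro i
  refine ⟨(f i).1, ?_, rfl⟩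
  rw [← hf]
  exact Finset.single_le_sum (f := fun i => (f i).1) (fun _ _ => Nat.zero_le _) (Finset.mem_univ i)

lemma PP_pow (t : ℕ) : PP ^ t = Ser (fun f : Fin t → Σ k : ℕ, k.Partition => ∑ i, (f i).1) := by
  induction t with
  | zero =>
    ext n
    simp only [Ser, PowerSeries.coeff_mk, pow_zero, PowerSeries.coeff_one, Finset.univ_eq_empty, Finset.sum_empty]
    split_ifs with h
    · subst h; simp
    · have : {i : Fin 0 → Σ k : ℕ, k.Partition | 0 = n} = ∅ := by
        ext i; simp; omega
      rw [this]; simp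
  | succ t ih =>
    rw [pow_succ', ih, Ser_mul _ _ part_fin (multi_fin t)]
    ext n
    simp only [Ser, PowerSeries.coeff_mk]
    congr 1
    apply ncard_bij _ _ (fun p => (Fin.cons p.1 p.2 : Fin (t + 1) → Σ k : ℕ, k.Partition))
      (fun f => (f 0, Fin.tail f))
    · rintro ⟨a, f⟩ h; simpa [Fin.sum_univ_succ] using h
    · rintro f h; simpa [Fin.sum_univ_succ, Fin.tail] using h
    · rintro ⟨a, f⟩ h; simp
    · intro f h; simp

lemma multi_coeff (t n : ℕ) : (numMultipartitions t n : ZMod 2) = coeff n (PP ^ t) := by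
  rw [PP_pow]
  simp only [Ser, PowerSeries.coeff_mk]
  rfl

noncomputable def GG (m : ℕ) : (ZMod 2)⟦X⟧ := PowerSeries.mk fun n => (numRegularPartitions m n : ZMod 2)

open WithPiTopology in
lemma PP_mul : PP * FF = 1 := by
  let _ : TopologicalSpace (ZMod 2) := ⊥
  have _ : DiscreteTopology (ZMod 2) := ⟨rfl⟩
  have h1 : HasProd _ (PowerSeries.mk fun n ↦ _) := Nat.Partition.hasProd_powerSeriesMk_card_restricted (ZMod 2) (fun _ => True)
  have h2 := hasProd_one_sub_X_pow (ZMod 2)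
  have h3 := h1.mul h2
  have e : PP = (PowerSeries.mk fun n ↦ ((Nat.Partition.restricted n (fun _ => True)).card : ZMod 2)) := by
    ext n
    simp only [Ser, PowerSeries.coeff_mk]
    rw [part_set, ← Nat.card_coe_set_eq, Nat.card_range_of_injective (fun a b h => by simpa using h)]
    simp [Nat.Partition.restricted]
  rw [e]
  refine h3.unique ?_
  convert hasProd_one with i
  simp only [if_true]
  simp_rw [pow_mul]
  exact tsum_pow_mul_one_sub_of_constantCoeff_eq_zero (by simp)

open WithPiTopology in
lemma GG_mul (m : ℕ) [NeZero m] : GG m * FF = ex m FF := by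
  let _ : TopologicalSpace (ZMod 2) := ⊥
  have _ : DiscreteTopology (ZMod 2) := ⟨rfl⟩
  have hm : 0 < m := Nat.pos_of_ne_zero (NeZero.ne m)
  have h1 := Nat.Partition.hasProd_powerSeriesMk_card_restricted (ZMod 2) (fun j => ¬ m ∣ j)
  have h2 := hasProd_one_sub_X_pow (ZMod 2)
  have h3 := h1.mul h2
  have e : GG m = (PowerSeries.mk fun n ↦ ((Nat.Partition.restricted n (fun j => ¬ m ∣ j)).card : ZMod 2)) := by
    ext n
    simp only [GG, PowerSeries.coeff_mk, numRegularPartitions, Nat.Partition.restricted]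
    rw [Nat.card_eq_fintype_card, Fintype.card_subtype]
  rw [e]
  have hc : Continuous (ex m : (ZMod 2)⟦X⟧ →ₐ[ZMod 2] (ZMod 2)⟦X⟧) := by
    rw [continuous_iff_continuousAt]
    intro φ
    rw [ContinuousAt, tendsto_iff_coeff_tendsto]
    intro d
    simp only [coeff_ex]
    split_ifs
    · exact (continuous_coeff (ZMod 2) _).tendsto φ
    · exact tendsto_const_nhds
  have h4 := h2.map (ex m : (ZMod 2)⟦X⟧ →ₐ[ZMod 2] (ZMod 2)⟦X⟧) hc
  have h5 : ∏' i : ℕ, ((if ¬ m ∣ (i + 1) then ∑' j : ℕ, (X : (ZMod 2)⟦X⟧) ^ ((i + 1) * j) else 1) * (1 - X ^ (i + 1)))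
      = ∏' i, (1 - X ^ ((i + 1) * m)) := by
    simp_rw [ite_not, ite_mul, pow_mul]
    conv in fun b ↦ _ =>
      ext b
      rw [tsum_pow_mul_one_sub_of_constantCoeff_eq_zero (by simp)]
    refine tprod_eq_tprod_of_ne_one_bij (fun i ↦ (i.val + 1) * m - 1) ?_ ?_ ?_
    · intro a b h
      rw [tsub_left_inj (by nlinarith) (by nlinarith), mul_left_inj' (hm.ne.symm), add_left_inj] at h
      exact SetCoe.ext h
    · suffices ∀ (i : ℕ), m ∣ i + 1 → ∃ j ≠ 0, j * m - 1 = i by simpa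
      intro i hi
      obtain ⟨j, hj⟩ := dvd_def.mp hi
      refine ⟨j, by grind, Nat.sub_eq_of_eq_add ?_⟩
      rw [hj, mul_comm m j]
    · intro i
      have : (i + 1) * m - 1 + 1 = (i + 1) * m := by grind
      simp [this, pow_mul]
  rw [← h3.tprod_eq, ← h4.tprod_eq, h5]
  refine tprod_congr fun i => ?_
  simp [ex, mul_comm, pow_mul]

end series

section trace
open PowerSeries

lemma rescale_ex {K : Type*} [Field K] (μ : K) (hμ : μ ^ 11 = 1) (φ : K⟦X⟧) :
    rescale μ (ex 11 φ) = ex 11 φ := by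
  ext n
  rw [coeff_rescale, coeff_ex]
  split_ifs with h
  · obtain ⟨m, rfl⟩ := h
    rw [pow_mul, hμ, one_pow, one_mul]
  · simp

/-- Reciprocal sum of the roots of the modular polynomial. -/
lemma root_sum {R ι : Type*} [CommRing R] [IsDomain R] (h2 : (2 : R) = 0) [Fintype ι] [DecidableEq ι]
    (hι : Fintype.card ι = 12) (r g : ι → R) (c x : R) (hr : Function.Injective r)
    (hroot : ∀ i, r i * c = r i ^ 12 + r i ^ 3 * c ^ 3 + c ^ 12) (hg : ∀ i, r i * g i = x)
    (hc : c ≠ 0) : x = (∑ i, g i) * c ^ 11 := by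
  classical
  have hneg : ∀ y : R, -y = y := fun y => by linear_combination (-y) * h2
  let p : Polynomial R := Polynomial.X ^ 12 + (Polynomial.C (c ^ 3) * Polynomial.X ^ 3 +
    Polynomial.C c * Polynomial.X + Polynomial.C (c ^ 12))
  let q : Polynomial R := ∏ i, (Polynomial.X - Polynomial.C (r i))
  have hlow : (Polynomial.C (c ^ 3) * Polynomial.X ^ 3 +
    Polynomial.C c * Polynomial.X + Polynomial.C (c ^ 12) : Polynomial R).degree < (12 : ℕ) := by
    refine lt_of_le_of_lt (b := ((3 : ℕ) : WithBot ℕ)) ?_ (by norm_cast)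
    compute_degree
    norm_num
  have hpm : p.Monic := Polynomial.monic_X_pow_add hlow
  have hpd : p.degree = (12 : ℕ) := by
    rw [Polynomial.degree_add_eq_left_of_degree_lt] <;> rw [Polynomial.degree_X_pow]
    exact hlow
  have hqm : q.Monic := Polynomial.monic_prod_of_monic _ _ fun i _ => Polynomial.monic_X_sub_C _
  have hqd : q.degree = (12 : ℕ) := by
    simp only [q, Polynomial.degree_prod, Polynomial.degree_X_sub_C]
    simp [hι]
  have hpq : p = q := by
    apply Polynomial.eq_of_degree_sub_lt_of_eval_finset_eq (Finset.univ.image r)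
    · rw [Finset.card_image_of_injective _ hr, Finset.card_univ, hι, ← hpd]
      exact Polynomial.degree_sub_lt_left (hpd.trans hqd.symm) hpm.ne_zero
        (hpm.leadingCoeff.trans hqm.leadingCoeff.symm)
    · intro y hy
      obtain ⟨i, _, rfl⟩ := Finset.mem_image.mp hy
      have hq0 : q.eval (r i) = 0 := by
        simp only [q, Polynomial.eval_prod]
        exact Finset.prod_eq_zero (Finset.mem_univ i) (by simp)
      rw [hq0]
      simp only [p, Polynomial.eval_add, Polynomial.eval_mul, Polynomial.eval_pow,
        Polynomial.eval_X, Polynomial.eval_C]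
      linear_combination -(hroot i) + (r i * c) * h2
  have h0 : c ^ 12 = ∏ i, r i := by
    have := congrArg (Polynomial.eval 0) hpq
    simpa [p, q, Polynomial.eval_prod, hneg] using this
  have h1 : c = ∑ i, ∏ j ∈ Finset.univ.erase i, r j := by
    have := congrArg (fun t => Polynomial.eval 0 (Polynomial.derivative t)) hpq
    simp only [p, q, Polynomial.derivative_prod_finset, Polynomial.eval_finsetSum, Polynomial.eval_prod,
      Polynomial.derivative_add, Polynomial.derivative_mul, Polynomial.derivative_C,
      Polynomial.derivative_X_pow, Polynomial.derivative_X, Polynomial.derivative_sub,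
      Polynomial.eval_add, Polynomial.eval_mul, Polynomial.eval_pow, Polynomial.eval_sub,
      Polynomial.eval_C, Polynomial.eval_X, Polynomial.eval_zero, Polynomial.eval_one] at this
    simpa [hneg] using this
  apply mul_right_cancel₀ hc
  calc x * c = ∑ i, x * ∏ j ∈ Finset.univ.erase i, r j := by rw [← Finset.mul_sum, ← h1]
    _ = ∑ i, g i * c ^ 12 := by
        refine Finset.sum_congr rfl fun i _ => ?_
        rw [h0, ← Finset.mul_prod_erase Finset.univ r (Finset.mem_univ i), ← hg i]
        ring
    _ = (∑ i, g i) * c ^ 11 * c := by rw [← Finset.sum_mul]; ring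

lemma trace_id {K : Type*} [Field K] [CharP K 2] (ζ : K) (hζ : IsPrimitiveRoot ζ 11) (F P : K⟦X⟧)
    (hFP : P * F = 1) (hc : constantCoeff F = 1)
    (hM : F * ex 11 F = F ^ 12 + X * F ^ 3 * ex 11 F ^ 3 + X ^ 5 * ex 11 F ^ 12) :
    (∑ j : Fin 11, rescale (ζ ^ (j : ℕ)) (X ^ 120 * ex 24 P)) + ex 2904 P = ex 264 (P ^ 11) := by
  have hX : ∀ k [NeZero k], ex k (X : K⟦X⟧) = X ^ k := fun k _ => PowerSeries.expand_X _ _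
  have h2 : (2 : K⟦X⟧) = 0 := by
    have : (2 : K) = 0 := CharTwo.two_eq_zero
    have h := congrArg (C : K →+* K⟦X⟧) this
    rwa [map_ofNat, map_zero] at h
  set a : K⟦X⟧ := X * ex 24 F with ha
  set c : K⟦X⟧ := X ^ 11 * ex 264 F with hcdef
  set d : K⟦X⟧ := X ^ 121 * ex 2904 F with hd
  have hac : ex 11 a = c := by
    rw [ha, map_mul, hX, ex_ex 11 24 264 rfl]
  have hcd : ex 11 c = d := by
    rw [hcdef, map_mul, map_pow, hX, ex_ex 11 264 2904 rfl, ← pow_mul]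
  have E1 : a * c = a ^ 12 + a ^ 3 * c ^ 3 + c ^ 12 := by
    have := congrArg (ex 24) hM
    simp only [map_mul, map_add, map_pow, hX, ex_ex 24 11 264 rfl] at this
    rw [ha, hcdef]
    linear_combination X ^ 12 * this
  have E2 : c * d = c ^ 12 + c ^ 3 * d ^ 3 + d ^ 12 := by
    have := congrArg (ex 11) E1
    simpa only [map_mul, map_add, map_pow, hac, hcd] using this
  have hz : ∀ j : ℕ, (ζ ^ j) ^ 11 = 1 := fun j => by
    rw [← pow_mul, mul_comm, pow_mul, hζ.pow_eq_one, one_pow]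
  have hF0 : ∀ k [NeZero k], ex k F ≠ 0 := by
    intro k _ h
    have := congrArg constantCoeff h
    rw [ex, PowerSeries.constantCoeff_expand, hc] at this
    simp at this
  have hc0 : c ≠ 0 := mul_ne_zero (pow_ne_zero _ X_ne_zero) (hF0 264)
  let r : Option (Fin 11) → K⟦X⟧ := fun o => o.elim d (fun j => rescale (ζ ^ (j : ℕ)) a)
  let g : Option (Fin 11) → K⟦X⟧ := fun o => o.elim (ex 2904 P)
    (fun j => rescale (ζ ^ (j : ℕ)) (X ^ 120 * ex 24 P))
  have ca : coeff 1 a = 1 := by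
    rw [ha, show (1 : ℕ) = 0 + 1 from rfl, mul_comm, coeff_succ_mul_X, coeff_zero_eq_constantCoeff_apply, ex,
      PowerSeries.constantCoeff_expand, hc]
  have cj : ∀ j : ℕ, coeff 1 (rescale (ζ ^ j) a) = ζ ^ j := by
    intro j; rw [coeff_rescale, ca]; simp
  have cd : coeff 1 d = 0 := by
    rw [hd, coeff_X_pow_mul']; simp
  have hζ0 : ζ ≠ 0 := hζ.ne_zero (by norm_num)
  have key := root_sum h2 (by simp) r g c (X ^ 121) ?_ ?_ ?_ hc0
  · have hsum : ∑ i, g i = (∑ j : Fin 11, rescale (ζ ^ (j : ℕ)) (X ^ 120 * ex 24 P)) + ex 2904 P := by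
      rw [Fintype.sum_option, add_comm]
      rfl
    rw [← hsum]
    have hPF : ex 264 P * ex 264 F = 1 := by rw [← map_mul, hFP, map_one]
    have k2 : (1 : K⟦X⟧) = (∑ i, g i) * ex 264 F ^ 11 := by
      apply mul_left_cancel₀ (pow_ne_zero 121 (X_ne_zero (R := K)))
      rw [mul_one]
      rw [hcdef] at key
      linear_combination key
    calc ∑ i, g i = (∑ i, g i) * (ex 264 P * ex 264 F) ^ 11 := by rw [hPF]; ring
      _ = ((∑ i, g i) * ex 264 F ^ 11) * ex 264 P ^ 11 := by ring
      _ = ex 264 (P ^ 11) := by rw [← k2, map_pow, one_mul]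
  · intro o o' h
    rcases o with _ | j <;> rcases o' with _ | j'
    · rfl
    · exfalso
      have h' := congrArg (coeff 1) h
      change coeff 1 d = coeff 1 (rescale (ζ ^ (j' : ℕ)) a) at h'
      rw [cd, cj] at h'
      exact pow_ne_zero _ hζ0 h'.symm
    · exfalso
      have h' := congrArg (coeff 1) h
      change coeff 1 (rescale (ζ ^ (j : ℕ)) a) = coeff 1 d at h'
      rw [cd, cj] at h'
      exact pow_ne_zero _ hζ0 h'
    · have h' := congrArg (coeff 1) h
      change coeff 1 (rescale (ζ ^ (j : ℕ)) a) = coeff 1 (rescale (ζ ^ (j' : ℕ)) a) at h'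
      rw [cj, cj] at h'
      have := hζ.pow_inj j.2 j'.2 h'
      rw [Fin.ext this]
  · intro o
    rcases o with _ | j
    · change d * c = d ^ 12 + d ^ 3 * c ^ 3 + c ^ 12
      linear_combination E2
    · change rescale (ζ ^ (j : ℕ)) a * c = rescale (ζ ^ (j : ℕ)) a ^ 12 + rescale (ζ ^ (j : ℕ)) a ^ 3 * c ^ 3 + c ^ 12
      have hcj : rescale (ζ ^ (j : ℕ)) c = c := by rw [← hac]; exact rescale_ex _ (hz _) _
      have := congrArg (rescale (ζ ^ (j : ℕ))) E1
      simpa only [map_mul, map_add, map_pow, hcj] using this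
  · intro o
    rcases o with _ | j
    · change d * ex 2904 P = X ^ 121
      have : ex 2904 P * ex 2904 F = 1 := by rw [← map_mul, hFP, map_one]
      rw [hd]
      linear_combination X ^ 121 * this
    · change rescale (ζ ^ (j : ℕ)) a * rescale (ζ ^ (j : ℕ)) (X ^ 120 * ex 24 P) = X ^ 121
      have : ex 24 P * ex 24 F = 1 := by rw [← map_mul, hFP, map_one]
      have h3 : a * (X ^ 120 * ex 24 P) = ex 11 (X ^ 11) := by
        rw [map_pow, hX, ha]
        linear_combination X ^ 121 * this
      rw [← map_mul, h3, rescale_ex _ (hz _), map_pow, hX, ← pow_mul]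

lemma partition_id (N : ℕ) (hN : 1 ≤ N) :
    coeff (11 * N - 5) PP + coeff N (ex 11 PP) = coeff N (PP ^ 11) := by
  let K := AlgebraicClosure (ZMod 2)
  have : CharP K 2 := charP_of_injective_algebraMap (algebraMap (ZMod 2) K).injective 2
  have : NeZero ((11 : ℕ) : ZMod 2) := ⟨by decide⟩
  obtain ⟨ζ, hζ⟩ := HasEnoughRootsOfUnity.exists_primitiveRoot K 11
  let f : ZMod 2 →+* K := algebraMap (ZMod 2) K
  have hmap : ∀ k [NeZero k] (φ : (ZMod 2)⟦X⟧), PowerSeries.map f (ex k φ) = ex k (PowerSeries.map f φ) :=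
    fun k _ φ => PowerSeries.map_expand _ _ _ _
  have hF0 : constantCoeff FF = 1 := by
    rw [← coeff_zero_eq_constantCoeff_apply]
    have := PowerSeries.coeff_pentagonalSeries_pentagonal (ZMod 2) 0
    simpa [pentagonal] using this
  have key := trace_id ζ hζ (PowerSeries.map f FF) (PowerSeries.map f PP)
    (by rw [← map_mul, PP_mul, map_one])
    (by rw [← coeff_zero_eq_constantCoeff_apply, PowerSeries.coeff_map, coeff_zero_eq_constantCoeff_apply, hF0, map_one])
    (by
      have := congrArg (PowerSeries.map f) modular_eq
      simpa only [map_mul, map_add, map_pow, hmap, PowerSeries.map_X] using this)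
  have hk := congrArg (coeff (264 * N)) key
  rw [coeff_ex_mul, map_add, ← ex_ex 264 11 2904 rfl, coeff_ex_mul, map_sum] at hk
  have hz : ∀ j : ℕ, (ζ ^ j) ^ (264 * N) = 1 := fun j => by
    rw [← pow_mul, show j * (264 * N) = 11 * (24 * N * j) by ring, pow_mul, hζ.pow_eq_one, one_pow]
  simp only [coeff_rescale, hz, one_mul] at hk
  rw [coeff_X_pow_mul', if_pos (by omega), show 264 * N - 120 = 24 * (11 * N - 5) by omega,
    coeff_ex_mul, ← hmap, ← map_pow, PowerSeries.coeff_map, PowerSeries.coeff_map,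
    PowerSeries.coeff_map] at hk
  have h11 : (11 : K) = 1 := by
    have : (2 : K) = 0 := CharTwo.two_eq_zero
    linear_combination 5 * this
  simp only [Finset.sum_const, Finset.card_univ, Fintype.card_fin, nsmul_eq_mul] at hk
  rw [show ((11 : ℕ) : K) = 1 by exact_mod_cast h11, one_mul, ← map_add] at hk
  exact f.injective hk

end trace

section final
open PowerSeries

lemma two_zero : (2 : (ZMod 2)⟦X⟧) = 0 := by
  have h := congrArg (C : ZMod 2 →+* (ZMod 2)⟦X⟧) (show (2 : ZMod 2) = 0 by decide)
  rwa [map_ofNat, map_zero] at h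

lemma coeff_Q (j : ℕ) : coeff j (PP ^ 11 + ex 11 PP) = coeff (11 * j) (X ^ 5 * PP) := by
  rw [coeff_X_pow_mul', map_add]
  rcases Nat.eq_zero_or_pos j with rfl | hj
  · rw [if_neg (by omega)]
    have hP : constantCoeff PP = 1 := by
      have h := congrArg constantCoeff PP_mul
      have hF0 : constantCoeff FF = 1 := by
        rw [← coeff_zero_eq_constantCoeff_apply]
        have := PowerSeries.coeff_pentagonalSeries_pentagonal (ZMod 2) 0
        simpa [pentagonal] using this
      rw [map_mul, hF0, mul_one, map_one] at h
      exact h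
    rw [coeff_zero_eq_constantCoeff_apply, coeff_zero_eq_constantCoeff_apply, map_pow, ex,
      PowerSeries.constantCoeff_expand, hP]
    decide
  · rw [if_pos (by omega), ← partition_id j hj]
    generalize coeff (11 * j - 5) PP = a
    generalize coeff j (ex 11 PP) = b
    revert a b
    decide

lemma conv_id (H : (ZMod 2)⟦X⟧) (N : ℕ) (hN : 1 ≤ N) :
    coeff (11 * N - 5) (ex 11 H * PP) = coeff N (H * (PP ^ 11 + ex 11 PP)) := by
  have h1 : coeff (11 * N - 5) (ex 11 H * PP) = coeff (11 * N) (ex 11 H * (X ^ 5 * PP)) := by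
    rw [mul_left_comm, coeff_X_pow_mul', if_pos (by omega)]
  rw [h1, coeff_mul, coeff_mul]
  symm
  apply Finset.sum_of_injOn (fun x : ℕ × ℕ => (11 * x.1, 11 * x.2))
  · rintro ⟨a, b⟩ _ ⟨c, d⟩ _ h
    simp only [Prod.mk.injEq] at h ⊢
    omega
  · rintro ⟨a, b⟩ h
    simp only [Finset.mem_coe, Finset.HasAntidiagonal.mem_antidiagonal] at h ⊢
    omega
  · rintro ⟨a, b⟩ h h'
    rw [Finset.HasAntidiagonal.mem_antidiagonal] at h
    simp only at h
    rw [coeff_ex, if_neg, zero_mul]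
    rintro ⟨k, rfl⟩
    apply h'
    refine ⟨(k, N - k), ?_, ?_⟩
    · simp only [Finset.mem_coe, Finset.HasAntidiagonal.mem_antidiagonal]; omega
    · exact Prod.ext rfl (show 11 * (N - k) = b by omega)
  · rintro ⟨a, b⟩ _
    rw [coeff_Q, coeff_ex_mul]

lemma coeff_vanish (s : ℕ) [NeZero s] (N : ℕ) (h : ∀ k : ℤ, ¬ s * pentagonal k ≡ N [MOD 11]) :
    coeff N (ex s FF * ex 11 PP) = 0 := by
  rw [coeff_mul]
  apply Finset.sum_eq_zero
  rintro ⟨a, b⟩ hab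
  rw [Finset.HasAntidiagonal.mem_antidiagonal] at hab
  simp only at hab
  rw [coeff_ex, coeff_ex]
  split_ifs with h1 h2
  · obtain ⟨m, rfl⟩ := h1
    obtain ⟨l, rfl⟩ := h2
    rw [Nat.mul_div_cancel_left _ (Nat.pos_of_ne_zero (NeZero.ne s))]
    rw [PowerSeries.coeff_pentagonalSeries_eq_zero, zero_mul]
    rintro ⟨k, rfl⟩
    apply h k
    rw [← hab]
    simp [Nat.ModEq, Nat.add_mod]
  · simp
  · simp
  · simp

lemma pent_mod (k : ℤ) : pentagonal k % 11 ∈ ({0, 1, 2, 4, 5, 7} : Finset ℕ) := by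
  have h := congrArg (Int.cast : ℤ → ZMod 11) (two_mul_natCast_pentagonal k)
  push_cast at h
  have key : ∀ x y : ZMod 11, 2 * y = x * (3 * x - 1) → y.val ∈ ({0, 1, 2, 4, 5, 7} : Finset ℕ) := by
    decide
  have := key _ _ h
  rwa [ZMod.val_natCast] at this

lemma final_id (s m t : ℕ) [NeZero s] [NeZero m] (hm : 11 * s = m) (ht : t + s = 11)
    (hs : FF ^ s = ex s FF) (n B : ℕ) (hB : 1 ≤ B)
    (hv : ∀ r ∈ ({0, 1, 2, 4, 5, 7} : Finset ℕ), s * r % 11 ≠ B % 11) :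
    numRegularPartitions m (121 * n + 11 * B - 5) ≡ numMultipartitions t (11 * n + B) [MOD 2] := by
  rw [← ZMod.natCast_eq_natCast_iff, multi_coeff]
  have hG : GG m = ex 11 (FF ^ s) * PP := by
    have h := GG_mul m
    rw [hs, ex_ex 11 s m hm, ← h, mul_assoc, mul_comm FF, PP_mul, mul_one]
  have e : (numRegularPartitions m (121 * n + 11 * B - 5) : ZMod 2)
      = coeff (11 * (11 * n + B) - 5) (GG m) := by
    rw [show 11 * (11 * n + B) - 5 = 121 * n + 11 * B - 5 by omega]
    simp [GG]
  have hz := coeff_vanish s (11 * n + B) (fun k hk => by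
    apply hv _ (pent_mod k)
    have : (s * pentagonal k) % 11 = B % 11 := by
      rw [hk]; omega
    rw [← this, Nat.mul_mod, Nat.mod_mod, ← Nat.mul_mod])
  rw [e, hG, conv_id _ _ (by omega), mul_add, map_add]
  nth_rewrite 2 [hs]
  rw [hz, add_zero]
  congr 1
  rw [← ht, pow_add, mul_comm, mul_assoc, ← mul_pow, PP_mul, one_pow, mul_one]

end final

theorem stmt_2 (n : ℕ) :
    (∀ B ∈ ({1, 5, 6, 7, 9} : Finset ℕ),
      numRegularPartitions 22 (121 * n + 11 * B - 5) ≡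
        numMultipartitions 9 (11 * n + B) [MOD 2]) ∧
    (∀ B ∈ ({1, 2, 3, 7, 10} : Finset ℕ),
      numRegularPartitions 44 (121 * n + 11 * B - 5) ≡
        numMultipartitions 7 (11 * n + B) [MOD 2]) ∧
    (∀ B ∈ ({2, 3, 4, 6, 9} : Finset ℕ),
      numRegularPartitions 88 (121 * n + 11 * B - 5) ≡
        numMultipartitions 3 (11 * n + B) [MOD 2]) := by
  refine ⟨fun B hB => ?_, fun B hB => ?_, fun B hB => ?_⟩
  · apply final_id 2 22 9 rfl rfl (sq_eq_ex _) n B <;> revert B <;> decide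
  · apply final_id 4 44 7 rfl rfl (pow4_eq_ex _) n B <;> revert B <;> decide
  · apply final_id 8 88 3 rfl rfl (pow8_eq_ex _) n B <;> revert B <;> decide
end
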